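/- arXiv:2510.17506 — 3 statements merged into one kernel-verified Lean document; each statement's English description precedes it below -/
import Mathlib

section
/- Let 0 < a < c and b > 0, and let T be the planar map T(x,y) = ((1 − (a + A(x,y))y²)x, (1 + (b + B(x))x² − (c + C(y))y²)y) with A, B, C real-analytic near the origin and vanishing at the origin, and set κ := √(b/(c−a)). Then there exists δ > 0 such that for all initial points (x₀, y₀) with 0 < x₀ < δ and 0 < y₀ < δ and every ε with 0 < ε < κ, there exists τ ∈ ℕ such that the iterates (x_t, y_t) := T^t(x₀, y₀) satisfy, for all t ≥ τ: x_τ/√(1 + 3a(κ+ε)²x_τ²(t−τ)) ≤ x_t ≤ x_τ/√(1 + 2a(κ−ε)²x_τ²(t−τ)) and (κ − ε/2)x_t ≤ y_t ≤ (κ + ε/2)x_t. In particular there exist constants 0 < c₁ ≤ c₂ and T₀ ∈ ℕ such that c₁ t^{−1/2} ≤ x_t ≤ c₂ t^{−1/2} and c₁ t^{−1/2} ≤ y_t ≤ c₂ t^{−1/2} for all t ≥ T₀. -/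
open Filter Topology

/-- Box invariance for the second coordinate. -/
lemma box_y {b c x y B C δ Y : ℝ} (hb : 0 < b) (hc : 0 < c) (hx : 0 < x) (hxδ : x ≤ δ)
    (hy : 0 < y) (hyY : y ≤ Y) (hB : |B| ≤ b / 2) (hC : |C| ≤ c / 4)
    (hY : c * Y ^ 2 ≤ 1 / 8) (hδ : 3 * b * δ ^ 2 ≤ c * Y ^ 2) :
    0 < (1 + (b + B) * x ^ 2 - (c + C) * y ^ 2) * y ∧
      (1 + (b + B) * x ^ 2 - (c + C) * y ^ 2) * y ≤ Y := by
  obtain ⟨hB1, hB2⟩ := abs_le.mp hB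
  obtain ⟨hC1, hC2⟩ := abs_le.mp hC
  have hx2 : x ^ 2 ≤ δ ^ 2 := by gcongr
  have hy2 : y ^ 2 ≤ Y ^ 2 := by gcongr
  have h1 : 0 ≤ (b + B) * x ^ 2 := by
    apply mul_nonneg _ (sq_nonneg x); linarith
  have h2 : (c + C) * y ^ 2 ≤ (2 * c) * Y ^ 2 := by
    apply mul_le_mul _ hy2 (sq_nonneg y) (by linarith); linarith
  have h3 : (b + B) * x ^ 2 ≤ (3 / 2 * b) * δ ^ 2 := by
    apply mul_le_mul _ hx2 (sq_nonneg x) (by linarith); linarith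
  have h4 : (c / 2) * y ^ 2 ≤ (c + C) * y ^ 2 := by
    apply mul_le_mul_of_nonneg_right _ (sq_nonneg y); linarith
  constructor
  · apply mul_pos _ hy; nlinarith
  · have h5 : (1 + (b + B) * x ^ 2 - (c + C) * y ^ 2) * y
        ≤ (1 + c / 2 * Y ^ 2 - c / 2 * y ^ 2) * y := by
      apply mul_le_mul_of_nonneg_right _ hy.le; linarith
    have h6 : Y - (1 + c / 2 * Y ^ 2 - c / 2 * y ^ 2) * y
        = (Y - y) * (1 - c / 2 * (y * (Y + y))) := by ring
    have hY0 : 0 < Y := by linarith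
    have h7 : c * (y * (Y + y)) ≤ c * (Y * (Y + Y)) := by gcongr
    have h8 : 0 ≤ (Y - y) * (1 - c / 2 * (y * (Y + y))) := by
      apply mul_nonneg (by linarith); nlinarith
    linarith

/-- Lower cone invariance. -/
lemma cone_low {a b c x y A B C ρ : ℝ} (ha : 0 < a) (hac : a < c) (hx : 0 < x)
    (hy : 0 < y) (hA : |A| ≤ a / 2) (hB : |B| ≤ b / 2) (hCA : |C - A| ≤ (c - a) / 2)
    (hY : c * y ^ 2 ≤ 1 / 8) (hρ : 0 < ρ) (hρ2 : 3 * (c - a) * ρ ^ 2 ≤ b)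
    (h : ρ * x ≤ y) :
    ρ * ((1 - (a + A) * y ^ 2) * x) ≤ (1 + (b + B) * x ^ 2 - (c + C) * y ^ 2) * y := by
  obtain ⟨hA1, hA2⟩ := abs_le.mp hA
  obtain ⟨hB1, hB2⟩ := abs_le.mp hB
  obtain ⟨hC1, hC2⟩ := abs_le.mp hCA
  have key : (1 + (b + B) * x ^ 2 - (c + C) * y ^ 2) * y - ρ * ((1 - (a + A) * y ^ 2) * x)
      = (y - ρ * x) * (1 - (a + A) * y ^ 2) + y * ((b + B) * x ^ 2 - (c - a + (C - A)) * y ^ 2) := by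
    ring
  have h1 : 3 / 2 * (c - a) * (ρ * x) ^ 2 ≤ (b + B) * x ^ 2 := by
    have : 3 / 2 * (c - a) * ρ ^ 2 * x ^ 2 ≤ (b + B) * x ^ 2 := by
      apply mul_le_mul_of_nonneg_right _ (sq_nonneg x); linarith
    nlinarith
  have h2 : (c - a + (C - A)) * y ^ 2 ≤ 3 / 2 * (c - a) * y ^ 2 := by
    apply mul_le_mul_of_nonneg_right _ (sq_nonneg y); linarith
  have h3 : y * (3 / 2 * (c - a) * ((ρ * x) ^ 2 - y ^ 2)) ≤
      y * ((b + B) * x ^ 2 - (c - a + (C - A)) * y ^ 2) := by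
    apply mul_le_mul_of_nonneg_left _ hy.le; linarith
  have h4 : (a + A) * y ^ 2 ≤ 3 / 2 * a * y ^ 2 := by
    apply mul_le_mul_of_nonneg_right _ (sq_nonneg y); linarith
  have h5 : (c - a) * (y * (ρ * x + y)) ≤ (c - a) * (y * (y + y)) := by
    have : 0 ≤ c - a := by linarith
    gcongr
  have h6 : 0 ≤ (y - ρ * x) * (1 - (a + A) * y ^ 2 - 3 / 2 * (c - a) * (y * (ρ * x + y))) := by
    apply mul_nonneg (by linarith)
    have : 0 ≤ a * y ^ 2 := by positivity
    nlinarith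
  nlinarith

/-- Upper cone invariance. -/
lemma cone_high {a b c x y A B C R : ℝ} (ha : 0 < a) (hac : a < c) (hb : 0 < b) (hx : 0 < x)
    (hy : 0 < y) (hA : |A| ≤ a / 2) (hB : |B| ≤ b / 2) (hCA : |C - A| ≤ (c - a) / 2)
    (hY : c * y ^ 2 ≤ 1 / 8) (hX : b * x ^ 2 ≤ 1 / 24) (hR : 0 < R)
    (hR2 : 3 * b ≤ (c - a) * R ^ 2) (h : y ≤ R * x) :
    (1 + (b + B) * x ^ 2 - (c + C) * y ^ 2) * y ≤ R * ((1 - (a + A) * y ^ 2) * x) := by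
  obtain ⟨hA1, hA2⟩ := abs_le.mp hA
  obtain ⟨hB1, hB2⟩ := abs_le.mp hB
  obtain ⟨hC1, hC2⟩ := abs_le.mp hCA
  have hd : 0 < c - a := by linarith
  have key : R * ((1 - (a + A) * y ^ 2) * x) - (1 + (b + B) * x ^ 2 - (c + C) * y ^ 2) * y
      = (R * x - y) * (1 - (a + A) * y ^ 2) - y * ((b + B) * x ^ 2 - (c - a + (C - A)) * y ^ 2) := by
    ring
  obtain ⟨S, hS0, hS⟩ : ∃ S : ℝ, 0 < S ∧ (c - a) * S ^ 2 = 3 * b := by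
    refine ⟨Real.sqrt (3 * b / (c - a)), Real.sqrt_pos.mpr (by positivity), ?_⟩
    rw [Real.sq_sqrt (by positivity)]; field_simp
  have hSR : S ≤ R := by
    by_contra hlt
    push Not at hlt
    have : R ^ 2 < S ^ 2 := by gcongr
    nlinarith
  have h1 : (b + B) * x ^ 2 ≤ 1 / 2 * (c - a) * (S * x) ^ 2 := by
    have : (b + B) * x ^ 2 ≤ (1 / 2 * (c - a) * S ^ 2) * x ^ 2 := by
      apply mul_le_mul_of_nonneg_right _ (sq_nonneg x); linarith
    nlinarith
  have h2 : 1 / 2 * (c - a) * y ^ 2 ≤ (c - a + (C - A)) * y ^ 2 := by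
    apply mul_le_mul_of_nonneg_right _ (sq_nonneg y); linarith
  have h3 : y * ((b + B) * x ^ 2 - (c - a + (C - A)) * y ^ 2) ≤
      y * (1 / 2 * (c - a) * ((S * x) ^ 2 - y ^ 2)) := by
    apply mul_le_mul_of_nonneg_left _ hy.le; linarith
  have h4 : (a + A) * y ^ 2 ≤ 3 / 2 * a * y ^ 2 := by
    apply mul_le_mul_of_nonneg_right _ (sq_nonneg y); linarith
  have h4' : a * y ^ 2 ≤ c * y ^ 2 := by gcongr
  have hSx : S * x ≤ R * x := by gcongr
  rcases le_total (S * x) y with hc | hc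
  · have h5 : 0 ≤ (R * x - y) * (1 - (a + A) * y ^ 2) := by
      apply mul_nonneg (by linarith); linarith
    have h6 : y * (1 / 2 * (c - a) * ((S * x) ^ 2 - y ^ 2)) ≤ 0 := by
      apply mul_nonpos_of_nonneg_of_nonpos hy.le
      apply mul_nonpos_of_nonneg_of_nonpos (by linarith)
      have : (S * x) ^ 2 ≤ y ^ 2 := by gcongr
      linarith
    linarith
  · have h5 : (c - a) * (y * (S * x + y)) ≤ (c - a) * ((S * x) * (S * x + S * x)) := by
      gcongr
    have h5' : (c - a) * ((S * x) * (S * x + S * x)) = 6 * (b * x ^ 2) := by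
      have : (c - a) * ((S * x) * (S * x + S * x)) = 2 * ((c - a) * S ^ 2) * x ^ 2 := by ring
      rw [this, hS]; ring
    have h6 : (S * x - y) * (1 / 2 * ((c - a) * (y * (S * x + y)))) ≤
        (R * x - y) * (1 / 2 * ((c - a) * (y * (S * x + y)))) := by
      gcongr
    have h7 : 0 ≤ (R * x - y) * (1 - (a + A) * y ^ 2 - 1 / 2 * ((c - a) * (y * (S * x + y)))) := by
      apply mul_nonneg (by linarith); linarith
    nlinarith

/-- One-step lower bound for the growth of `1/x²`. -/
lemma inv_sq_low {a A x y m : ℝ} (hx : 0 < x) (hw0 : 0 ≤ (a + A) * y ^ 2)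
    (hw : (a + A) * y ^ 2 ≤ 1 / 2) (hm : m * x ^ 2 ≤ 2 * ((a + A) * y ^ 2)) :
    1 / x ^ 2 + m ≤ 1 / ((1 - (a + A) * y ^ 2) * x) ^ 2 := by
  generalize (a + A) * y ^ 2 = w at *
  have hD : 0 < 1 - w := by linarith
  have h1 : 1 / x ^ 2 + m = (1 + m * x ^ 2) / x ^ 2 := by field_simp
  rw [h1, div_le_div_iff₀ (by positivity) (by positivity)]
  have h2 : (1 + m * x ^ 2) * (1 - w) ^ 2 ≤ 1 := by
    have : (1 + m * x ^ 2) * (1 - w) ^ 2 ≤ (1 + 2 * w) * (1 - w) ^ 2 := by gcongr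
    nlinarith [mul_nonneg hw0 hw0, mul_nonneg (mul_nonneg hw0 hw0) hw0]
  calc (1 + m * x ^ 2) * ((1 - w) * x) ^ 2 = ((1 + m * x ^ 2) * (1 - w) ^ 2) * x ^ 2 := by ring
    _ ≤ 1 * x ^ 2 := by gcongr

/-- One-step upper bound for the growth of `1/x²`. -/
lemma inv_sq_high {a A x y m : ℝ} (hx : 0 < x) (hw0 : 0 ≤ (a + A) * y ^ 2)
    (hw : (a + A) * y ^ 2 ≤ 1 / 2) 
    (hm : (a + A) * y ^ 2 * 2 ≤ (1 - (a + A) * y ^ 2) ^ 2 * (m * x ^ 2)) :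
    1 / ((1 - (a + A) * y ^ 2) * x) ^ 2 ≤ 1 / x ^ 2 + m := by
  generalize (a + A) * y ^ 2 = w at *
  have hD : 0 < 1 - w := by linarith
  have h1 : 1 / x ^ 2 + m = (1 + m * x ^ 2) / x ^ 2 := by field_simp
  rw [h1, div_le_div_iff₀ (by positivity) (by positivity)]
  have h2 : 1 ≤ (1 + m * x ^ 2) * (1 - w) ^ 2 := by nlinarith
  calc 1 * x ^ 2 ≤ ((1 + m * x ^ 2) * (1 - w) ^ 2) * x ^ 2 := by gcongr
    _ = _ := by ring

/-- Contraction towards the line `y = κ x`. -/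
lemma contract {a b c κ x y A B C R e : ℝ} (hac : a < c) (hκ : 0 < κ)
    (hκ2 : (c - a) * κ ^ 2 = b) (hx : 0 < x) (hy : 0 < y) (hyR : y ≤ R * x)
    (hB : |B| ≤ e) (hCA : |C - A| ≤ e) 
    (hw : 0 ≤ 1 - (a + A) * y ^ 2 - (c - a) * (y * (κ * x + y))) :
    |(1 + (b + B) * x ^ 2 - (c + C) * y ^ 2) * y - κ * ((1 - (a + A) * y ^ 2) * x)| ≤
      |y - κ * x| * (1 - (a + A) * y ^ 2 - (c - a) * (y * (κ * x + y)))
       + y * x ^ 2 * (e * (1 + R ^ 2)) := by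
  have key : (1 + (b + B) * x ^ 2 - (c + C) * y ^ 2) * y - κ * ((1 - (a + A) * y ^ 2) * x)
     = (y - κ * x) * (1 - (a + A) * y ^ 2 - (c - a) * (y * (κ * x + y)))
       + y * (B * x ^ 2 - (C - A) * y ^ 2) := by
    rw [← hκ2]; ring
  rw [key]
  refine (abs_add_le _ _).trans ?_
  rw [abs_mul, abs_of_nonneg hw, abs_mul, abs_of_pos hy]
  have h1 : |B * x ^ 2 - (C - A) * y ^ 2| ≤ e * x ^ 2 + e * (R * x) ^ 2 := by
    refine (abs_sub _ _).trans ?_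
    rw [abs_mul, abs_mul, abs_of_nonneg (sq_nonneg x), abs_of_nonneg (sq_nonneg y)]
    have he : 0 ≤ e := (abs_nonneg _).trans hB
    gcongr
  have : y * |B * x ^ 2 - (C - A) * y ^ 2| ≤ y * (e * x ^ 2 + e * (R * x) ^ 2) := by gcongr
  nlinarith

/-- Divergence of the harmonic series, in the form needed. -/
lemma no_descent (u : ℕ → ℝ) (k α K : ℝ) (hk : 0 < k) (hα : 0 < α) (hK : 0 < K) (τ : ℕ)
    (hu : ∀ t, 0 ≤ u t) (h : ∀ t, τ ≤ t → u (t + 1) ≤ u t - k / (α + K * t)) : False := by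
  set k' := k / (α + K * τ + K) with hk'
  have hk'0 : 0 < k' := by positivity
  have h1 : ∀ n, u (τ + n) ≤ u τ - k' * ∑ i ∈ Finset.range n, 1 / ((i : ℝ) + 1) := by
    intro n
    induction n with
    | zero => simp
    | succ n ih =>
      rw [Finset.sum_range_succ, ← add_assoc]
      have h2 := h (τ + n) (by omega)
      have h3 : k' * (1 / ((n : ℝ) + 1)) ≤ k / (α + K * ((τ + n : ℕ) : ℝ)) := by
        rw [hk', mul_one_div, div_div]
        push_cast
        apply div_le_div_of_nonneg_left hk.le (by positivity)
        have : (0:ℝ) ≤ n := by positivity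
        have : (0:ℝ) ≤ K * τ * n := by positivity
        have : (0:ℝ) ≤ α * n := by positivity
        nlinarith
      linarith
  have h2 := Real.tendsto_sum_range_one_div_nat_succ_atTop
  obtain ⟨n, hn⟩ := (h2.eventually_gt_atTop (u τ / k')).exists
  have h3 := h1 n
  have h4 := hu (τ + n)
  rw [div_lt_iff₀ hk'0] at hn
  linarith

/-- The orbit data used in the proof. -/
structure Orb (a b c : ℝ) (x y A B C : ℕ → ℝ) : Prop where
  ha : 0 < a
  hac : a < c
  hb : 0 < b
  hx : ∀ t, 0 < x t
  hy : ∀ t, 0 < y t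
  hA : ∀ t, |A t| ≤ a / 2
  hB : ∀ t, |B t| ≤ b / 2
  hCA : ∀ t, |C t - A t| ≤ (c - a) / 2
  hY : ∀ t, c * y t ^ 2 ≤ 1 / 8
  hX : ∀ t, b * x t ^ 2 ≤ 1 / 24
  sx : ∀ t, x (t + 1) = (1 - (a + A t) * y t ^ 2) * x t
  sy : ∀ t, y (t + 1) = (1 + (b + B t) * x t ^ 2 - (c + C t) * y t ^ 2) * y t

lemma Orb.w_bound {a b c : ℝ} {x y A B C : ℕ → ℝ} (h : Orb a b c x y A B C) (t : ℕ) :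
    a / 2 * y t ^ 2 ≤ (a + A t) * y t ^ 2 ∧ (a + A t) * y t ^ 2 ≤ 3 / 2 * a * y t ^ 2 ∧
     0 ≤ (a + A t) * y t ^ 2 ∧ (a + A t) * y t ^ 2 ≤ 3 / 16 := by
  obtain ⟨hA1, hA2⟩ := abs_le.mp (h.hA t)
  have ha := h.ha
  have hac := h.hac
  have hY := h.hY t
  have h0 := sq_nonneg (y t)
  have h1 : a / 2 * y t ^ 2 ≤ (a + A t) * y t ^ 2 := by gcongr; linarith
  have h2 : (a + A t) * y t ^ 2 ≤ 3 / 2 * a * y t ^ 2 := by gcongr; linarith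
  have h3 : a * y t ^ 2 ≤ c * y t ^ 2 := by gcongr
  have h4 : 0 ≤ a * y t ^ 2 := by positivity
  refine ⟨h1, h2, by linarith, by linarith⟩

lemma Orb.cone {a b c : ℝ} {x y A B C : ℕ → ℝ} (h : Orb a b c x y A B C) :
    ∃ ρ R : ℝ, 0 < ρ ∧ 0 < R ∧ ∀ t, ρ * x t ≤ y t ∧ y t ≤ R * x t := by
  have ha := h.ha
  have hac := h.hac
  have hb := h.hb
  have hd : 0 < c - a := by linarith
  have hx0 := h.hx 0
  have hy0 := h.hy 0
  set ρ := min (y 0 / x 0) (Real.sqrt (b / (3 * (c - a)))) with hρ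
  set R := max (y 0 / x 0) (Real.sqrt (3 * b / (c - a))) with hR
  have hρ0 : 0 < ρ := lt_min (by positivity) (Real.sqrt_pos.mpr (by positivity))
  have hR0 : 0 < R := lt_max_of_lt_left (by positivity)
  have hρ2 : 3 * (c - a) * ρ ^ 2 ≤ b := by
    have : ρ ^ 2 ≤ (Real.sqrt (b / (3 * (c - a)))) ^ 2 := by
      gcongr; exact min_le_right _ _
    rw [Real.sq_sqrt (by positivity), le_div_iff₀ (by positivity)] at this
    linarith
  have hR2 : 3 * b ≤ (c - a) * R ^ 2 := by
    have : (Real.sqrt (3 * b / (c - a))) ^ 2 ≤ R ^ 2 := by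
      gcongr; exact le_max_right _ _
    rw [Real.sq_sqrt (by positivity), div_le_iff₀ (by positivity)] at this
    linarith
  refine ⟨ρ, R, hρ0, hR0, fun t => ?_⟩
  induction t with
  | zero =>
    constructor
    · rw [← le_div_iff₀ hx0]; exact min_le_left _ _
    · rw [← div_le_iff₀ hx0]; exact le_max_left _ _
  | succ t ih =>
    rw [h.sx, h.sy]
    exact ⟨cone_low ha hac (h.hx t) (h.hy t) (h.hA t) (h.hB t) (h.hCA t) (h.hY t) hρ0 hρ2 ih.1,
      cone_high ha hac hb (h.hx t) (h.hy t) (h.hA t) (h.hB t) (h.hCA t) (h.hY t) (h.hX t)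
        hR0 hR2 ih.2⟩

lemma Orb.lims {a b c : ℝ} {x y A B C : ℕ → ℝ} (h : Orb a b c x y A B C) :
    Tendsto x atTop (𝓝 0) ∧ Tendsto y atTop (𝓝 0) ∧
    ∃ K : ℝ, 0 < K ∧ ∀ t : ℕ, 1 / x t ^ 2 ≤ 1 / x 0 ^ 2 + K * t := by
  obtain ⟨ρ, R, hρ, hR, hc⟩ := h.cone
  have ha := h.ha
  have hlow : ∀ t : ℕ, 1 / x 0 ^ 2 + (a * ρ ^ 2) * t ≤ 1 / x t ^ 2 := by
    intro t
    induction t with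
    | zero => simp
    | succ t ih =>
      obtain ⟨w1, w2, w3, w4⟩ := h.w_bound t
      have hxt := h.hx t
      have h1 : (ρ * x t) ^ 2 ≤ y t ^ 2 := by
        have := (hc t).1
        gcongr
      have h2 : a * (ρ * x t) ^ 2 ≤ a * y t ^ 2 := by gcongr
      have := inv_sq_low (m := a * ρ ^ 2) hxt w3 (by linarith) (by linarith)
      rw [h.sx]
      push_cast
      linarith
  have hhigh : ∀ t : ℕ, 1 / x t ^ 2 ≤ 1 / x 0 ^ 2 + (12 * a * R ^ 2) * t := by
    intro t
    induction t with
    | zero => simp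
    | succ t ih =>
      obtain ⟨w1, w2, w3, w4⟩ := h.w_bound t
      have hxt := h.hx t
      have hyt := h.hy t
      have h1 : y t ^ 2 ≤ (R * x t) ^ 2 := by
        have := (hc t).2
        gcongr
      have h2 : a * y t ^ 2 ≤ a * (R * x t) ^ 2 := by gcongr
      have h3 : (1 / 4 : ℝ) ≤ (1 - (a + A t) * y t ^ 2) ^ 2 := by nlinarith
      have h4 : (1 / 4 : ℝ) * (12 * a * R ^ 2 * x t ^ 2) ≤
        (1 - (a + A t) * y t ^ 2) ^ 2 * (12 * a * R ^ 2 * x t ^ 2) := by gcongr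
      have := inv_sq_high (m := 12 * a * R ^ 2) hxt w3 (by linarith) (by linarith)
      rw [h.sx]
      push_cast
      linarith
  have hX : Tendsto (fun t => 1 / x t ^ 2) atTop atTop := by
    apply tendsto_atTop_mono hlow
    apply tendsto_atTop_add_const_left
    exact tendsto_natCast_atTop_atTop.const_mul_atTop (by positivity)
  have hx2 : Tendsto (fun t => x t ^ 2) atTop (𝓝 0) := by
    have := hX.inv_tendsto_atTop
    refine this.congr fun t => ?_
    simp
  have hx : Tendsto x atTop (𝓝 0) := by
    have := (Real.continuous_sqrt.tendsto 0).comp hx2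
    rw [Real.sqrt_zero] at this
    refine this.congr fun t => ?_
    simp [Real.sqrt_sq (h.hx t).le]
  refine ⟨hx, ?_, _, by positivity, hhigh⟩
  have hRx : Tendsto (fun t => R * x t) atTop (𝓝 0) := by simpa using hx.const_mul R
  exact squeeze_zero (fun t => (h.hy t).le) (fun t => (hc t).2) hRx

lemma Orb.ratio {a b c κ : ℝ} {x y A B C : ℕ → ℝ} (h : Orb a b c x y A B C)
    (hκ : 0 < κ) (hκ2 : (c - a) * κ ^ 2 = b)
    (lA : Tendsto A atTop (𝓝 0)) (lB : Tendsto B atTop (𝓝 0)) (lC : Tendsto C atTop (𝓝 0))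
    (η : ℝ) (hη : 0 < η) : ∃ τ : ℕ, ∀ t, τ ≤ t → |y t - κ * x t| ≤ η * x t := by
  obtain ⟨ρ, R, hρ, hR, hc⟩ := h.cone
  obtain ⟨lx, ly, K, hK, hKx⟩ := h.lims
  have hd : 0 < c - a := by linarith [h.hac]
  set e := η * (c - a) * κ / (2 * (1 + R ^ 2)) with he
  have he0 : 0 < e := by positivity
  have heR : e * (1 + R ^ 2) = η * (c - a) * κ / 2 := by rw [he]; field_simp
  have lCA : Tendsto (fun t => |C t - A t|) atTop (𝓝 0) := by simpa using (lC.sub lA).abs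
  have lB' : Tendsto (fun t => |B t|) atTop (𝓝 0) := by simpa using lB.abs
  have lyx : Tendsto (fun t => (c - a) * (y t * (κ * x t + y t))) atTop (𝓝 0) := by
    simpa using (ly.mul ((lx.const_mul κ).add ly)).const_mul (c - a)
  obtain ⟨τ₀, hτ₀⟩ := eventually_atTop.mp ((lCA.eventually_lt_const he0).and
    ((lB'.eventually_lt_const he0).and (lyx.eventually_lt_const (show (0:ℝ) < 1 / 2 by norm_num))))
  -- one step estimate
  have step : ∀ t, τ₀ ≤ t → |y (t + 1) - κ * x (t + 1)| ≤
      |y t - κ * x t| * (1 - (a + A t) * y t ^ 2 - (c - a) * (y t * (κ * x t + y t)))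
       + y t * x t ^ 2 * (η * (c - a) * κ / 2) := by
    intro t ht
    obtain ⟨e1, e2, e3⟩ := hτ₀ t ht
    obtain ⟨w1, w2, w3, w4⟩ := h.w_bound t
    rw [h.sx, h.sy, ← heR]
    exact contract h.hac hκ hκ2 (h.hx t) (h.hy t) (hc t).2 e2.le e1.le (by linarith)
  have pres : ∀ t, τ₀ ≤ t → |y t - κ * x t| ≤ η * x t →
      |y (t + 1) - κ * x (t + 1)| ≤ η * x (t + 1) := by
    intro t ht hle
    obtain ⟨e1, e2, e3⟩ := hτ₀ t ht
    obtain ⟨w1, w2, w3, w4⟩ := h.w_bound t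
    refine (step t ht).trans ?_
    have hxt := h.hx t
    have hyt := h.hy t
    have h1 : |y t - κ * x t| * (1 - (a + A t) * y t ^ 2 - (c - a) * (y t * (κ * x t + y t)))
      ≤ η * x t * (1 - (a + A t) * y t ^ 2 - (c - a) * (y t * (κ * x t + y t))) := by
      apply mul_le_mul_of_nonneg_right hle; linarith
    rw [h.sx]
    have h2 : 0 ≤ η * x t * (c - a) * y t * y t := by positivity
    have h3 : 0 ≤ η * (c - a) * κ * y t * x t ^ 2 := by positivity
    nlinarith
  have ex : ∃ τ₁, τ₀ ≤ τ₁ ∧ |y τ₁ - κ * x τ₁| ≤ η * x τ₁ := by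
    by_contra hne
    push Not at hne
    apply no_descent (fun t => |y t - κ * x t| / x t) (η * (c - a) * κ * ρ / 2) (1 / x 0 ^ 2) K
      (by positivity) (by have := h.hx 0; positivity) hK τ₀
    · intro t; have := h.hx t; positivity
    · intro t ht
      obtain ⟨e1, e2, e3⟩ := hτ₀ t ht
      obtain ⟨w1, w2, w3, w4⟩ := h.w_bound t
      have hxt := h.hx t
      have hyt := h.hy t
      have hgt := hne t ht
      have hst := step t ht
      have hX : 1 / (1 / x 0 ^ 2 + K * t) ≤ x t ^ 2 := by
        rw [div_le_iff₀ (by have := h.hx 0; positivity)]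
        have := hKx t
        rw [div_le_iff₀ (by positivity)] at this
        linarith
      have hq : η * (c - a) * κ * ρ / 2 / (1 / x 0 ^ 2 + K * t) ≤
          η * (c - a) * κ * ρ / 2 * x t ^ 2 := by
        rw [div_eq_mul_one_div]; gcongr
      refine le_trans ?_ (sub_le_sub_left hq _)
      show |y (t + 1) - κ * x (t + 1)| / x (t + 1) ≤ _
      have hD : 0 < 1 - (a + A t) * y t ^ 2 := by linarith
      rw [div_le_iff₀ (h.hx (t + 1))]
      refine hst.trans ?_
      rw [h.sx]
      have e4 : (|y t - κ * x t| / x t - η * (c - a) * κ * ρ / 2 * x t ^ 2) *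
          ((1 - (a + A t) * y t ^ 2) * x t) = |y t - κ * x t| * (1 - (a + A t) * y t ^ 2)
           - η * (c - a) * κ / 2 * x t ^ 2 * (ρ * x t) * (1 - (a + A t) * y t ^ 2) := by
        field_simp
      rw [e4]
      have e5 : η * (c - a) * κ / 2 * x t ^ 2 * (ρ * x t) * (1 - (a + A t) * y t ^ 2) ≤
          η * (c - a) * κ / 2 * x t ^ 2 * y t * 1 := by
        have := (hc t).1
        gcongr
        linarith
      have e6 : η * x t * ((c - a) * (y t * (κ * x t))) ≤
          |y t - κ * x t| * ((c - a) * (y t * (κ * x t + y t))) := by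
        gcongr
        linarith
      nlinarith
  obtain ⟨τ₁, h01, hτ₁⟩ := ex
  refine ⟨τ₁, fun t ht => ?_⟩
  induction t, ht using Nat.le_induction with
  | base => exact hτ₁
  | succ t ht ih => exact pres t (h01.trans ht) ih

lemma Orb.growth {a b c κ : ℝ} {x y A B C : ℕ → ℝ} (h : Orb a b c x y A B C)
    (hκ : 0 < κ) (hκ2 : (c - a) * κ ^ 2 = b)
    (lA : Tendsto A atTop (𝓝 0)) (lB : Tendsto B atTop (𝓝 0)) (lC : Tendsto C atTop (𝓝 0))
    (ε : ℝ) (hε : 0 < ε) (hεκ : ε < κ) : ∃ τ : ℕ, ∀ t, τ ≤ t →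
      (κ - ε / 2) * x t ≤ y t ∧ y t ≤ (κ + ε / 2) * x t ∧
      1 / x τ ^ 2 + 2 * a * (κ - ε) ^ 2 * ((t : ℝ) - τ) ≤ 1 / x t ^ 2 ∧
      1 / x t ^ 2 ≤ 1 / x τ ^ 2 + 3 * a * (κ + ε) ^ 2 * ((t : ℝ) - τ) := by
  obtain ⟨τ₁, hτ₁⟩ := h.ratio hκ hκ2 lA lB lC (ε / 2) (by positivity)
  obtain ⟨lx, ly, -⟩ := h.lims
  have ha := h.ha
  set θ := a * (1 - (κ - ε) ^ 2 / (κ - ε / 2) ^ 2) with hθ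
  have hp : 0 < κ - ε := by linarith
  have hp2 : 0 < κ - ε / 2 := by linarith
  have hθ0 : 0 < θ := by
    apply mul_pos ha
    rw [sub_pos, div_lt_one (by positivity)]
    have : κ - ε < κ - ε / 2 := by linarith
    gcongr
  have hθ2 : (a - θ) * (κ - ε / 2) ^ 2 = a * (κ - ε) ^ 2 := by
    have e : (κ - ε) ^ 2 / (κ - ε / 2) ^ 2 * (κ - ε / 2) ^ 2 = (κ - ε) ^ 2 :=
      div_mul_cancel₀ _ (by positivity)
    rw [hθ]; linear_combination a * e
  have lA' : Tendsto (fun t => |A t|) atTop (𝓝 0) := by simpa using lA.abs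
  have ly2 : Tendsto (fun t => a * y t ^ 2) atTop (𝓝 0) := by
    simpa using (ly.pow 2).const_mul a
  obtain ⟨τ₂, hτ₂⟩ := eventually_atTop.mp ((lA'.eventually_lt_const hθ0).and
    ((lA'.eventually_lt_const (show 0 < a / 4 by positivity)).and
    (ly2.eventually_lt_const (show (0:ℝ) < 1 / 50 by norm_num))))
  have cone : ∀ t, τ₁ ≤ t → (κ - ε / 2) * x t ≤ y t ∧ y t ≤ (κ + ε / 2) * x t := by
    intro t ht
    have := abs_le.mp (hτ₁ t ht)
    constructor <;> linarith
  have st : ∀ t, max τ₁ τ₂ ≤ t → 1 / x t ^ 2 + 2 * a * (κ - ε) ^ 2 ≤ 1 / x (t + 1) ^ 2 ∧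
      1 / x (t + 1) ^ 2 ≤ 1 / x t ^ 2 + 3 * a * (κ + ε) ^ 2 := by
    intro t ht
    obtain ⟨c1, c2⟩ := cone t ((le_max_left _ _).trans ht)
    obtain ⟨e1, e2, e3⟩ := hτ₂ t ((le_max_right _ _).trans ht)
    obtain ⟨w1, w2, w3, w4⟩ := h.w_bound t
    obtain ⟨e11, e12⟩ := abs_lt.mp e1
    obtain ⟨e21, e22⟩ := abs_lt.mp e2
    have hxt := h.hx t
    have hyt := h.hy t
    rw [h.sx]
    constructor
    · apply inv_sq_low hxt w3 (by linarith)
      have h1 : ((κ - ε / 2) * x t) ^ 2 ≤ y t ^ 2 := by gcongr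
      have h2 : (a - θ) * ((κ - ε / 2) * x t) ^ 2 ≤ (a + A t) * y t ^ 2 := by
        have : 0 ≤ a + A t := by linarith
        gcongr
        linarith
      have h3 : (a - θ) * ((κ - ε / 2) * x t) ^ 2 = a * (κ - ε) ^ 2 * x t ^ 2 := by
        rw [← hθ2]; ring
      linarith
    · apply inv_sq_high hxt w3 (by linarith)
      have h1 : y t ^ 2 ≤ ((κ + ε) * x t) ^ 2 := by
        have : (κ + ε / 2) * x t ≤ (κ + ε) * x t := by gcongr; linarith
        have := c2.trans this
        gcongr
      have h2 : (a + A t) * y t ^ 2 ≤ (5 / 4 * a) * ((κ + ε) * x t) ^ 2 := by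
        gcongr
        linarith
      have h3 : (a + A t) * y t ^ 2 ≤ 3 / 100 := by linarith
      have h4 : (5 / 6 : ℝ) ≤ (1 - (a + A t) * y t ^ 2) ^ 2 := by nlinarith
      have h5 : (5 / 6 : ℝ) * (3 * a * (κ + ε) ^ 2 * x t ^ 2) ≤
        (1 - (a + A t) * y t ^ 2) ^ 2 * (3 * a * (κ + ε) ^ 2 * x t ^ 2) := by gcongr
      linarith
  refine ⟨max τ₁ τ₂, fun t ht => ?_⟩
  obtain ⟨c1, c2⟩ := cone t ((le_max_left _ _).trans ht)
  refine ⟨c1, c2, ?_⟩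
  clear c1 c2
  induction t, ht using Nat.le_induction with
  | base => simp
  | succ t ht ih =>
    obtain ⟨s1, s2⟩ := st t ht
    push_cast at ih ⊢
    constructor <;> linarith [ih.1, ih.2]

lemma conv_le {u v m s : ℝ} (hu : 0 < u) (hv : 0 < v) (hm : 0 ≤ m * s)
    (h : 1 / u ^ 2 + m * s ≤ 1 / v ^ 2) : v ≤ u / Real.sqrt (1 + m * u ^ 2 * s) := by
  have h0 : 0 ≤ m * s * u ^ 2 := by positivity
  have h1 : 0 < 1 + m * u ^ 2 * s := by nlinarith
  rw [le_div_iff₀ (Real.sqrt_pos.mpr h1)]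
  apply le_of_sq_le_sq _ hu.le
  rw [mul_pow, Real.sq_sqrt h1.le]
  have e : 1 / u ^ 2 + m * s = (1 + m * u ^ 2 * s) / u ^ 2 := by field_simp
  rw [e, div_le_div_iff₀ (by positivity) (by positivity)] at h
  linarith

lemma conv_ge {u v m s : ℝ} (hu : 0 < u) (hv : 0 < v) (hm : 0 ≤ m * s)
    (h : 1 / v ^ 2 ≤ 1 / u ^ 2 + m * s) : u / Real.sqrt (1 + m * u ^ 2 * s) ≤ v := by
  have h0 : 0 ≤ m * s * u ^ 2 := by positivity
  have h1 : 0 < 1 + m * u ^ 2 * s := by nlinarith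
  have hs := Real.sqrt_pos.mpr h1
  rw [div_le_iff₀ hs]
  apply le_of_sq_le_sq _ (by positivity)
  rw [mul_pow, Real.sq_sqrt h1.le]
  have e : 1 / u ^ 2 + m * s = (1 + m * u ^ 2 * s) / u ^ 2 := by field_simp
  rw [e, div_le_div_iff₀ (by positivity) (by positivity)] at h
  linarith

lemma Orb.final {a b c κ : ℝ} {x y A B C : ℕ → ℝ} (h : Orb a b c x y A B C)
    (hκ : 0 < κ) (hκ2 : (c - a) * κ ^ 2 = b)
    (lA : Tendsto A atTop (𝓝 0)) (lB : Tendsto B atTop (𝓝 0)) (lC : Tendsto C atTop (𝓝 0)) :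
    (∀ ε : ℝ, 0 < ε → ε < κ →
        ∃ τ : ℕ, ∀ t : ℕ, τ ≤ t →
          x τ / Real.sqrt (1 + 3 * a * (κ + ε) ^ 2 * x τ ^ 2 * ((t : ℝ) - (τ : ℝ))) ≤ x t ∧
          x t ≤ x τ / Real.sqrt (1 + 2 * a * (κ - ε) ^ 2 * x τ ^ 2 * ((t : ℝ) - (τ : ℝ))) ∧
          (κ - ε / 2) * x t ≤ y t ∧ y t ≤ (κ + ε / 2) * x t) ∧
      (∃ c₁ c₂ : ℝ, ∃ T₀ : ℕ, 0 < c₁ ∧ c₁ ≤ c₂ ∧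
        ∀ t : ℕ, T₀ ≤ t →
          c₁ / Real.sqrt t ≤ x t ∧ x t ≤ c₂ / Real.sqrt t ∧
          c₁ / Real.sqrt t ≤ y t ∧ y t ≤ c₂ / Real.sqrt t) := by
  have ha := h.ha
  constructor
  · intro ε hε hεκ
    obtain ⟨τ, hτ⟩ := h.growth hκ hκ2 lA lB lC ε hε hεκ
    refine ⟨τ, fun t ht => ?_⟩
    obtain ⟨h1, h2, h3, h4⟩ := hτ t ht
    have hs : 0 ≤ (t : ℝ) - τ := by
      have : (τ : ℝ) ≤ t := by exact_mod_cast ht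
      linarith
    exact ⟨conv_ge (h.hx τ) (h.hx t) (by positivity) h4,
      conv_le (h.hx τ) (h.hx t) (by positivity) h3, h1, h2⟩
  · obtain ⟨τ, hτ⟩ := h.growth hκ hκ2 lA lB lC (κ / 2) (by positivity) (by linarith)
    have hxτ := h.hx τ
    set P := 1 / x τ ^ 2 + 3 * a * (κ + κ / 2) ^ 2 with hP
    set Q := a * (κ - κ / 2) ^ 2 with hQ
    have hP0 : 0 < P := by positivity
    have hQ0 : 0 < Q := by
      have : 0 < κ - κ / 2 := by linarith
      positivity
    have hsP := Real.sqrt_pos.mpr hP0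
    have hsQ := Real.sqrt_pos.mpr hQ0
    have key : ∀ t : ℕ, 2 * τ + 1 ≤ t →
        1 / Real.sqrt P / Real.sqrt t ≤ x t ∧ x t ≤ 1 / Real.sqrt Q / Real.sqrt t := by
      intro t ht
      obtain ⟨-, -, h3, h4⟩ := hτ t (by omega)
      have htr : 2 * (τ : ℝ) + 1 ≤ t := by exact_mod_cast ht
      have hτ0 : (0 : ℝ) ≤ τ := by positivity
      have ht0 : (0 : ℝ) < t := by linarith
      have hxt := h.hx t
      have hst := Real.sqrt_pos.mpr ht0
      have hup : 1 / x t ^ 2 ≤ P * t := by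
        have e1 : 0 ≤ 1 / x τ ^ 2 := by positivity
        have e2 : 0 ≤ 3 * a * (κ + κ / 2) ^ 2 := by positivity
        rw [hP]
        nlinarith
      have hlo : Q * t ≤ 1 / x t ^ 2 := by
        have e1 : 0 ≤ 1 / x τ ^ 2 := by positivity
        have e3 : Q * t ≤ Q * (2 * ((t : ℝ) - τ)) := by
          gcongr; linarith
        rw [hQ] at *
        linarith
      rw [div_le_iff₀ (by positivity)] at hup
      rw [le_div_iff₀ (by positivity)] at hlo
      constructor
      · rw [div_div, div_le_iff₀ (by positivity)]
        apply le_of_sq_le_sq _ (by positivity)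
        rw [mul_pow, mul_pow, Real.sq_sqrt hP0.le, Real.sq_sqrt ht0.le]
        linarith
      · rw [div_div, le_div_iff₀ (by positivity)]
        apply le_of_sq_le_sq _ (by positivity)
        rw [mul_pow, mul_pow, Real.sq_sqrt hQ0.le, Real.sq_sqrt ht0.le]
        linarith
    set p := 1 / Real.sqrt P with hp
    set q := 1 / Real.sqrt Q with hq
    have hp0 : 0 < p := by positivity
    have hq0 : 0 < q := by positivity
    set lo := min 1 (κ - κ / 2 / 2) with hlo
    set hi := max 1 (κ + κ / 2 / 2) with hhi
    have hlo0 : 0 < lo := lt_min one_pos (by linarith)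
    have hhi0 : 0 < hi := lt_max_of_lt_left one_pos
    have hpq : p ≤ q := by
      obtain ⟨k1, k2⟩ := key (2 * τ + 1) le_rfl
      have := k1.trans k2
      have h0 : 0 < Real.sqrt ((2 * τ + 1 : ℕ) : ℝ) := Real.sqrt_pos.mpr (by positivity)
      rwa [div_le_div_iff_of_pos_right h0] at this
    refine ⟨lo * p, hi * q, 2 * τ + 1, by positivity, ?_, fun t ht => ?_⟩
    · have : lo ≤ hi := (min_le_left _ _).trans (le_max_left _ _)
      gcongr
    · obtain ⟨k1, k2⟩ := key t ht
      obtain ⟨h1, h2, -, -⟩ := hτ t (by omega)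
      have hxt := h.hx t
      have m1 : lo * (p / Real.sqrt t) ≤ lo * x t := by gcongr
      have m2 : hi * x t ≤ hi * (q / Real.sqrt t) := by gcongr
      rw [mul_div_assoc, mul_div_assoc]
      have n1 : lo * x t ≤ 1 * x t := by gcongr; exact min_le_left _ _
      have n2 : lo * x t ≤ (κ - κ / 2 / 2) * x t := by gcongr; exact min_le_right _ _
      have n3 : 1 * x t ≤ hi * x t := by gcongr; exact le_max_left _ _
      have n4 : (κ + κ / 2 / 2) * x t ≤ hi * x t := by gcongr; exact le_max_right _ _
      refine ⟨?_, ?_, ?_, ?_⟩ <;> linarith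

theorem stmt_0
    (a b c : ℝ) (ha : 0 < a) (hac : a < c) (hb : 0 < b)
    (A : ℝ × ℝ → ℝ) (B C : ℝ → ℝ)
    (hA : AnalyticAt ℝ A (0, 0)) (hBa : AnalyticAt ℝ B 0) (hCa : AnalyticAt ℝ C 0)
    (hA0 : A (0, 0) = 0) (hB0 : B 0 = 0) (hC0 : C 0 = 0)
    (T : ℝ × ℝ → ℝ × ℝ)
    (hT : ∀ x y : ℝ,
      T (x, y) = ((1 - (a + A (x, y)) * y ^ 2) * x,
                  (1 + (b + B x) * x ^ 2 - (c + C y) * y ^ 2) * y))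
    (κ : ℝ) (hκ : κ = Real.sqrt (b / (c - a))) :
    ∃ δ : ℝ, 0 < δ ∧ ∀ x₀ y₀ : ℝ, 0 < x₀ → x₀ < δ → 0 < y₀ → y₀ < δ →
      (∀ ε : ℝ, 0 < ε → ε < κ →
        ∃ τ : ℕ, ∀ t : ℕ, τ ≤ t →
          (T^[τ] (x₀, y₀)).1 /
              Real.sqrt (1 + 3 * a * (κ + ε) ^ 2 * (T^[τ] (x₀, y₀)).1 ^ 2 * ((t : ℝ) - (τ : ℝ)))
            ≤ (T^[t] (x₀, y₀)).1 ∧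
          (T^[t] (x₀, y₀)).1 ≤
            (T^[τ] (x₀, y₀)).1 /
              Real.sqrt (1 + 2 * a * (κ - ε) ^ 2 * (T^[τ] (x₀, y₀)).1 ^ 2 * ((t : ℝ) - (τ : ℝ))) ∧
          (κ - ε / 2) * (T^[t] (x₀, y₀)).1 ≤ (T^[t] (x₀, y₀)).2 ∧
          (T^[t] (x₀, y₀)).2 ≤ (κ + ε / 2) * (T^[t] (x₀, y₀)).1) ∧
      (∃ c₁ c₂ : ℝ, ∃ T₀ : ℕ, 0 < c₁ ∧ c₁ ≤ c₂ ∧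
        ∀ t : ℕ, T₀ ≤ t →
          c₁ / Real.sqrt t ≤ (T^[t] (x₀, y₀)).1 ∧ (T^[t] (x₀, y₀)).1 ≤ c₂ / Real.sqrt t ∧
          c₁ / Real.sqrt t ≤ (T^[t] (x₀, y₀)).2 ∧ (T^[t] (x₀, y₀)).2 ≤ c₂ / Real.sqrt t) := by
  have hd : 0 < c - a := by linarith
  have hc : 0 < c := by linarith
  have hκ0 : 0 < κ := by rw [hκ]; exact Real.sqrt_pos.mpr (by positivity)
  have hκ2 : (c - a) * κ ^ 2 = b := by
    rw [hκ, Real.sq_sqrt (by positivity)]; field_simp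
  have tA : Tendsto A (𝓝 (0, 0)) (𝓝 0) := by
    have := hA.continuousAt.tendsto; rwa [hA0] at this
  have tB : Tendsto B (𝓝 0) (𝓝 0) := by
    have := hBa.continuousAt.tendsto; rwa [hB0] at this
  have tC : Tendsto C (𝓝 0) (𝓝 0) := by
    have := hCa.continuousAt.tendsto; rwa [hC0] at this
  set η := min (a / 2) (min (b / 2) ((c - a) / 4)) with hη
  have hη0 : 0 < η := by
    refine lt_min (by positivity) (lt_min (by positivity) (by positivity))
  have hηa : η ≤ a / 2 := min_le_left _ _
  have hηb : η ≤ b / 2 := (min_le_right _ _).trans (min_le_left _ _)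
  have hηc : η ≤ (c - a) / 4 := (min_le_right _ _).trans (min_le_right _ _)
  obtain ⟨dA, hdA0, hdA⟩ := Metric.tendsto_nhds_nhds.mp tA η hη0
  obtain ⟨dB, hdB0, hdB⟩ := Metric.tendsto_nhds_nhds.mp tB η hη0
  obtain ⟨dC, hdC0, hdC⟩ := Metric.tendsto_nhds_nhds.mp tC η hη0
  obtain ⟨Y, hY0, hYA, hYB, hYC, hYc⟩ : ∃ Y : ℝ, 0 < Y ∧ Y < dA ∧ Y < dB ∧ Y < dC ∧
      c * Y ^ 2 ≤ 1 / 8 := by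
    have l : Tendsto (fun Y : ℝ => c * Y ^ 2) (𝓝[>] 0) (𝓝 0) := by
      have : Continuous (fun Y : ℝ => c * Y ^ 2) := by fun_prop
      have := this.tendsto 0
      simp only [ne_eq, OfNat.ofNat_ne_zero, not_false_eq_true, zero_pow, mul_zero] at this
      exact this.mono_left nhdsWithin_le_nhds
    have l' : Tendsto (fun Y : ℝ => Y) (𝓝[>] 0) (𝓝 0) := nhdsWithin_le_nhds
    obtain ⟨Y, h1, h2, h3, h4, h5⟩ := ((eventually_mem_nhdsWithin (a := (0:ℝ)) (s := Set.Ioi 0)).and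
      ((l'.eventually_lt_const hdA0).and ((l'.eventually_lt_const hdB0).and
      ((l'.eventually_lt_const hdC0).and
       (l.eventually_lt_const (show (0:ℝ) < 1 / 8 by norm_num)))))).exists
    exact ⟨Y, h1, h2, h3, h4, h5.le⟩
  set M := 1 + 3 * b / c with hM
  have hM1 : 1 ≤ M := by have : 0 < 3 * b / c := by positivity
                         linarith
  set δ := Y / M with hδ
  have hδ0 : 0 < δ := by positivity
  have hδY : δ ≤ Y := div_le_self hY0.le hM1
  have hδb : 3 * b * δ ^ 2 ≤ c * Y ^ 2 := by
    have e1 : Y = M * δ := by rw [hδ]; field_simp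
    have e2 : 3 * b ≤ c * M ^ 2 := by
      have : c * M = c + 3 * b := by rw [hM]; field_simp
      nlinarith
    rw [e1]
    nlinarith [mul_le_mul_of_nonneg_right e2 (sq_nonneg δ)]
  have bA : ∀ x y : ℝ, 0 < x → x ≤ δ → 0 < y → y ≤ Y → |A (x, y)| ≤ η := by
    intro x y hx hxd hy hyY
    have := hdA (x := (x, y)) (by
      rw [Prod.dist_eq, max_lt_iff]
      simp only [Real.dist_eq, sub_zero, abs_of_pos hx, abs_of_pos hy]
      constructor <;> linarith)
    rw [Real.dist_eq, sub_zero] at this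
    exact this.le
  have bB : ∀ x : ℝ, 0 < x → x ≤ δ → |B x| ≤ η := by
    intro x hx hxd
    have := hdB (x := x) (by
      rw [Real.dist_eq, sub_zero, abs_of_pos hx]; linarith)
    rw [Real.dist_eq, sub_zero] at this
    exact this.le
  have bC : ∀ y : ℝ, 0 < y → y ≤ Y → |C y| ≤ η := by
    intro y hy hyd
    have := hdC (x := y) (by
      rw [Real.dist_eq, sub_zero, abs_of_pos hy]; linarith)
    rw [Real.dist_eq, sub_zero] at this
    exact this.le
  refine ⟨δ, hδ0, fun x₀ y₀ hx₀ hx₀δ hy₀ hy₀δ => ?_⟩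
  set x : ℕ → ℝ := fun t => (T^[t] (x₀, y₀)).1 with hxdef
  set y : ℕ → ℝ := fun t => (T^[t] (x₀, y₀)).2 with hydef
  have hstep : ∀ t, T^[t + 1] (x₀, y₀) = T (x t, y t) := by
    intro t; rw [Function.iterate_succ_apply']
  have sx : ∀ t, x (t + 1) = (1 - (a + A (x t, y t)) * y t ^ 2) * x t := by
    intro t
    show (T^[t + 1] (x₀, y₀)).1 = _
    rw [hstep, hT]
  have sy : ∀ t, y (t + 1) = (1 + (b + B (x t)) * x t ^ 2 - (c + C (y t)) * y t ^ 2) * y t := by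
    intro t
    show (T^[t + 1] (x₀, y₀)).2 = _
    rw [hstep, hT]
  have box : ∀ t, (0 < x t ∧ x t ≤ δ) ∧ 0 < y t ∧ y t ≤ Y := by
    intro t
    induction t with
    | zero => exact ⟨⟨hx₀, hx₀δ.le⟩, hy₀, hy₀δ.le.trans hδY⟩
    | succ t ih =>
      obtain ⟨⟨h1, h2⟩, h3, h4⟩ := ih
      have hAt := (bA _ _ h1 h2 h3 h4)
      obtain ⟨q1, q2⟩ := abs_le.mp hAt
      constructor
      · rw [sx]
        have e1 : 0 ≤ (a + A (x t, y t)) * y t ^ 2 :=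
          mul_nonneg (by linarith) (sq_nonneg _)
        have e2 : (a + A (x t, y t)) * y t ^ 2 ≤ (2 * c) * Y ^ 2 := by
          gcongr; linarith
        constructor
        · apply mul_pos _ h1; linarith
        · nlinarith
      · rw [sy]
        exact box_y hb hc h1 h2 h3 h4 ((bB _ h1 h2).trans hηb)
          ((bC _ h3 h4).trans (by linarith)) hYc hδb
  have orb : Orb a b c x y (fun t => A (x t, y t)) (fun t => B (x t)) (fun t => C (y t)) := by
    refine ⟨ha, hac, hb, fun t => (box t).1.1, fun t => (box t).2.1, fun t => ?_, fun t => ?_,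
      fun t => ?_, fun t => ?_, fun t => ?_, sx, sy⟩ <;> obtain ⟨⟨h1, h2⟩, h3, h4⟩ := box t
    · exact (bA _ _ h1 h2 h3 h4).trans hηa
    · exact (bB _ h1 h2).trans hηb
    · refine (abs_sub _ _).trans ?_
      have := bA _ _ h1 h2 h3 h4
      have := bC _ h3 h4
      linarith
    · have : c * y t ^ 2 ≤ c * Y ^ 2 := by gcongr
      linarith
    · have : b * x t ^ 2 ≤ b * δ ^ 2 := by gcongr
      linarith
  obtain ⟨lx, ly, -⟩ := orb.lims
  exact orb.final hκ0 hκ2 (tA.comp (lx.prodMk_nhds ly)) (tB.comp lx) (tC.comp ly)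
end

section
/- Let a, b > 0 and let f₁, f₂ be real-analytic functions of (x, y, α) on a neighbourhood of the origin of ℝ³ for which there is K > 0 with |f₁(x,y,α)| ≤ K(|y|³ + |x|y²) and |f₂(x,y,α)| ≤ K(|x|³ + |y|³) for all sufficiently small (x, y, α). For α > 0 define F^{(α)}(x,y) := ((1 − ay² + f₁(x,y,α))x, −(1 + α + bx² − y² + f₂(x,y,α))y). Then there exist constants ᾱ, C₀, C₁, C₂, C₃ > 0 such that for every α ∈ (0, ᾱ]: F^{(α)} admits a period-two orbit {(0, ξ₊), (0, ξ₋)} with ξ₊ > 0 > ξ₋ and |ξ± ∓ √α| ≤ C₀α, and for every initial point (x₀, y₀) with 0 < |y₀| ≤ C₁√α and |x₀| ≤ C₂√α there is a constant C₄ > 0 (depending on the initial point and α) such that the iterates (x_t, y_t) := (F^{(α)})^t(x₀, y₀) satisfy dist((x_t, y_t), {(0, ξ₊), (0, ξ₋)}) ≤ C₄(1 − C₃α)^t for all t ∈ ℕ. -/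
lemma inv_up (s y w : ℝ) (hs : 0 < s) (hs1 : s ≤ 1/10) (hy0 : 0 ≤ y) (hy : y ≤ 11/10*s)
    (hw : |w| ≤ s^2/10) : 0 < 1 + s^2 - y^2 + w ∧ (1 + s^2 - y^2 + w) * y ≤ 11/10*s := by
  obtain ⟨h1, h2⟩ := abs_le.1 hw
  have hs2 : s^2 ≤ 1/100 := by nlinarith
  have hyy : y^2 ≤ 121/100*s^2 := by nlinarith
  have hys : y * (11/10*s+y) ≤ 1 := by nlinarith
  refine ⟨by nlinarith, ?_⟩
  have h3 : w * y ≤ s^2/10*y := mul_le_mul_of_nonneg_right h2 hy0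
  have h4 : 0 ≤ (11/10*s - y) * (1 - y*(11/10*s+y)) :=
    mul_nonneg (by linarith) (by linarith)
  have h5 : 0 ≤ s^2*y := by positivity
  nlinarith

lemma inv_low (s y w : ℝ) (hs : 0 < s) (hs1 : s ≤ 1/10) (hy0 : 9/10*s ≤ y) (hy : y ≤ 11/10*s)
    (hw : |w| ≤ s^2/10) : 9/10*s ≤ (1 + s^2 - y^2 + w) * y := by
  obtain ⟨h1, h2⟩ := abs_le.1 hw
  have hs2 : s^2 ≤ 1/100 := by nlinarith
  have hy00 : 0 ≤ y := by linarith
  have hyy : y^2 ≤ 121/100*s^2 := by nlinarith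
  have hys : y * (9/10*s+y) ≤ 1 := by nlinarith
  have h3 : -(s^2/10)*y ≤ w * y := mul_le_mul_of_nonneg_right h1 hy00
  have h4 : 0 ≤ (y - 9/10*s) * (1 - y*(9/10*s+y)) :=
    mul_nonneg (by linarith) (by linarith)
  have h5 : 0 ≤ s^2*y := by positivity
  nlinarith

lemma grow (s y w : ℝ) (hs : 0 < s) (hy0 : 0 ≤ y) (hy : y ≤ 9/10*s)
    (hw : |w| ≤ s^2/10) : (1 + 9/100*s^2) * y ≤ (1 + s^2 - y^2 + w) * y := by
  obtain ⟨h1, h2⟩ := abs_le.1 hw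
  have hyy : y^2 ≤ 81/100*s^2 := by nlinarith
  exact mul_le_mul_of_nonneg_right (by linarith) hy0

lemma fixinv (s y w K M : ℝ) (hs : 0 < s) (hs1 : s ≤ 1/10) (hK : 0 < K) (hM : M = 16*K+1)
    (hMs : M*s ≤ 1/100) (h1 : s - M*s^2 ≤ y) (h2 : y ≤ s + M*s^2) (hw : |w| ≤ K*y^3) :
    s - M*s^2 ≤ (1+s^2-y^2+w)*y ∧ (1+s^2-y^2+w)*y ≤ s + M*s^2 := by
  obtain ⟨hw1, hw2⟩ := abs_le.1 hw
  have hs2 : s^2 ≤ 1/100 := by nlinarith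
  have hMs2 : M*s^2 ≤ s/100 := by nlinarith
  have hM0 : 0 < M := by linarith
  have hMs20 : 0 < M*s^2 := by positivity
  have hy0 : 99/100*s ≤ y := by linarith
  have hy1 : y ≤ 101/100*s := by linarith
  have hy : 0 < y := by nlinarith
  have hy4 : y^4 ≤ (101/100*s)^4 := pow_le_pow_left₀ hy.le hy1 4
  have hwy1 : w*y ≤ K*y^4 := by nlinarith
  have hwy2 : -(K*y^4) ≤ w*y := by nlinarith
  have hKy : K*y^4 ≤ K*(11/10*s^4) := by
    refine mul_le_mul_of_nonneg_left ?_ hK.le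
    have : 0 < s^4 := by positivity
    nlinarith
  have hKM : K*(11/10*s^4) ≤ M*s^4 := by
    have : 0 < s^4 := by positivity
    nlinarith
  set A := s - M*s^2 with hA
  set B := s + M*s^2 with hB
  have q1 : 0 ≤ (y - A)*(1 + s^2 - (y^2+y*A+A^2)) := by
    refine mul_nonneg (by linarith) ?_
    nlinarith
  have q2 : 0 ≤ (B - y)*(1 + s^2 - (y^2+y*B+B^2)) := by
    refine mul_nonneg (by linarith) ?_
    nlinarith
  have r1 : M*s^4 ≤ A*(s^2-A^2) := by
    have e : A*(s^2-A^2) = s*(1-M*s)*(M*s^3*(2-M*s)) := by rw [hA]; ring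
    rw [e]
    have u1 : 99/100 * s ≤ s*(1-M*s) := by nlinarith
    have hp : 0 < M*s^3 := by positivity
    have u2 : M*s^3*(199/100) ≤ M*s^3*(2-M*s) :=
      mul_le_mul_of_nonneg_left (by linarith) hp.le
    calc M*s^4 ≤ (99/100*s)*(M*s^3*(199/100)) := by nlinarith [mul_pos hp hs]
      _ ≤ _ := mul_le_mul u1 u2 (by positivity) (by nlinarith)
  have r2 : M*s^4 ≤ B*(B^2-s^2) := by
    have e : B*(B^2-s^2) = M*s^4+ (M*s^4+3*M^2*s^5+M^3*s^6) := by rw [hB]; ring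
    rw [e]
    have : 0 ≤ (M*s^4+3*M^2*s^5+M^3*s^6) := by positivity
    linarith
  constructor <;> nlinarith

lemma contr (s y z u v : ℝ) (hs : 0 < s) (hs1 : s ≤ 1/10)
    (hy : y^2 ≤ 121/100*s^2) (hz : z^2 ≤ 121/100*s^2)
    (hyz : 81/100*s^2 ≤ y*z)
    (h : |y*u - z*v| ≤ 2/5*s^2*|y-z|) :
    |-(1+s^2-y^2+u)*y - -(1+s^2-z^2+v)*z| ≤ (1-s^2)*|y-z| := by
  have hs2 : s^2 ≤ 1/100 := by nlinarith
  have e : -(1+s^2-y^2+u)*y - -(1+s^2-z^2+v)*z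
     = -((y-z)*(1+s^2-(y^2+y*z+z^2)) + (y*u-z*v)) := by ring
  rw [e, abs_neg]
  refine (abs_add_le _ _).trans ?_
  rw [abs_mul]
  have : |1+s^2-(y^2+y*z+z^2)| ≤ 1 - 143/100*s^2 := by
    rw [abs_le]; constructor <;> nlinarith [sq_nonneg (y-z)]
  have := mul_le_mul_of_nonneg_left this (abs_nonneg (y-z))
  nlinarith [mul_nonneg (sq_nonneg s) (abs_nonneg (y-z))]

lemma lip_x (f : ℝ × ℝ × ℝ → ℝ) (hf : AnalyticAt ℝ f (0,0,0)) :
    ∃ δ > 0, ∃ L ≥ (0:ℝ), ∀ x y α : ℝ, |x| < δ → |y| < δ → |α| < δ →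
      |f (x,y,α) - f (0,y,α)| ≤ L*|x| := by
  obtain ⟨L, t, ht, hL⟩ := (hf.contDiffAt (n := 1)).exists_lipschitzOnWith
  obtain ⟨δ, hδ, hb⟩ := Metric.mem_nhds_iff.1 ht
  refine ⟨δ, hδ, L, L.2, fun x y α hx hy hα => ?_⟩
  have m1 : (x,y,α) ∈ t := hb (by simp [Prod.dist_eq, hx, hy, hα])
  have m2 : ((0:ℝ),y,α) ∈ t := hb (by simp [Prod.dist_eq, hδ, hy, hα])
  have := hL.dist_le_mul _ m1 _ m2
  simpa [Prod.dist_eq, Real.dist_eq] using this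

lemma lip_y (f : ℝ × ℝ × ℝ → ℝ) (hf : AnalyticAt ℝ f (0,0,0)) (K ρ : ℝ) (hK : 0 < K) (hρ : 0 < ρ)
    (hb : ∀ y α : ℝ, |y| < ρ → |α| < ρ → |f (0,y,α)| ≤ K*|y|^3) :
    ∃ δ > 0, ∀ y z α r : ℝ, |α| < δ → |y| ≤ r → |z| ≤ r → r < δ →
      |y*f (0,y,α) - z*f (0,z,α)| ≤ 3/10*r^2*|y-z| := by
  set D : ℝ × ℝ × ℝ → ℝ := fun p => fderiv ℝ f p (0,1,0) with hD
  have hDan : AnalyticAt ℝ D (0,0,0) := by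
    have h1 := hf.fderiv
    exact (ContinuousLinearMap.apply ℝ ℝ ((0:ℝ),(1:ℝ),(0:ℝ))).analyticAt _ |>.comp h1
  have hstr := hDan.hasStrictFDerivAt
  set D' := fderiv ℝ D (0,0,0) with hD'
  set c := D' (0,1,0) with hc
  have hε := hstr.isLittleO.def (show (0:ℝ) < 1/100 by norm_num)
  have hana := hf.eventually_analyticAt
  obtain ⟨δ1, hδ1, hb1⟩ := Metric.eventually_nhds_iff.1 hana
  obtain ⟨δ2, hδ2, hb2⟩ := Metric.eventually_nhds_iff.1 hε
  have hder : ∀ y α : ℝ, |y| < δ1 → |α| < δ1 → HasDerivAt (fun y => f (0,y,α)) (D (0,y,α)) y := by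
    intro y α hy hα
    have h1 : AnalyticAt ℝ f (0,y,α) := hb1 (by simp [Prod.dist_eq, hδ1, hy, hα])
    have h2 := h1.differentiableAt.hasFDerivAt
    have h3 : HasDerivAt (fun y : ℝ => ((0:ℝ),y,α)) ((0:ℝ),(1:ℝ),(0:ℝ)) y :=
      (hasDerivAt_const y (0:ℝ)).prodMk ((hasDerivAt_id y).prodMk (hasDerivAt_const y α))
    exact h2.comp_hasDerivAt y h3
  have hzero : ∀ α : ℝ, |α| < δ1 → |α| < ρ → D (0,0,α) = 0 := by
    intro α h1 h2
    have h3 := hder 0 α (by simpa using hδ1) h1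
    have h0 : f (0,0,α) = 0 := by
      have := hb 0 α (by simpa using hρ) h2
      simpa using this
    have h4 : HasDerivAt (fun y => f (0,y,α)) 0 0 := by
      rw [hasDerivAt_iff_isLittleO]
      have : (fun y : ℝ => f (0,y,α) - f (0,0,α) - (y - 0) • (0:ℝ)) =O[nhds 0] (fun y : ℝ => y^3) := by
        refine Asymptotics.IsBigO.of_bound K ?_
        filter_upwards [Metric.ball_mem_nhds (0:ℝ) hρ] with y hy
        have := hb y α (by simpa using hy) h2
        simpa [h0] using this
      refine this.trans_isLittleO ?_
      simpa using Asymptotics.isLittleO_pow_pow (𝕜 := ℝ) (show 1 < 3 by norm_num)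
    exact h3.unique h4
  set δ := min (min δ1 δ2) (min ρ (min 1 (1/(100*K)))) with hδdef
  have hδ : 0 < δ := by positivity
  have d1 : δ ≤ δ1 := by simp [hδdef]
  have d2 : δ ≤ δ2 := by simp [hδdef]
  have d3 : δ ≤ ρ := by simp [hδdef]
  have d5 : K*δ ≤ 1/100 := by
    have : δ ≤ 1/(100*K) := by simp [hδdef]
    calc K*δ ≤ K*(1/(100*K)) := by gcongr
      _ = 1/100 := by field_simp
  have hDc : ∀ y α : ℝ, |y| < δ → |α| < δ → |D (0,y,α) - c*y| ≤ 1/100*|y| := by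
    intro y α hy hα
    have h := @hb2 (((0:ℝ),y,α),((0:ℝ),(0:ℝ),α)) (by
      simp [Prod.dist_eq, hδ2, hy.trans_le d2, hα.trans_le d2])
    have e : D' (((0:ℝ),y,α) - ((0:ℝ),(0:ℝ),α)) = c*y := by
      have : (((0:ℝ),y,α) - ((0:ℝ),(0:ℝ),α)) = y • ((0:ℝ),(1:ℝ),(0:ℝ)) := by simp
      rw [this, map_smul, hc]; simp [mul_comm]
    simp only [hzero α (hα.trans_le d1) (hα.trans_le d3)] at h
    rw [e] at h
    simpa [Prod.norm_def] using h
  -- bound on c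
  have hcb : |c| ≤ 4/100 := by
    set w := δ/2 with hw
    have hw0 : 0 < w := by positivity
    have hwδ : w < δ := by rw [hw]; linarith
    have hmv : ‖(fun y => f (0,y,0) - c*y^2/2) w - (fun y => f (0,y,0) - c*y^2/2) 0‖
        ≤ (1/100*w) * ‖w - 0‖ := by
      refine Convex.norm_image_sub_le_of_norm_hasDerivWithin_le (𝕜 := ℝ)
        (f := fun y => f (0,y,0) - c*y^2/2)
        (f' := fun y => D (0,y,0) - c*y) (s := Set.Icc 0 w) ?_ ?_ (convex_Icc 0 w) ?_ ?_
      · intro y hy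
        have hyd : |y| < δ := by rw [abs_of_nonneg hy.1]; linarith [hy.2]
        have h1 := hder y 0 (hyd.trans_le d1) (by simpa using hδ1)
        have h2 : HasDerivAt (fun y : ℝ => c*y^2/2) (c*y) y := by
          have := ((hasDerivAt_pow 2 y).const_mul c).div_const 2
          refine this.congr_deriv ?_
          norm_num
          ring
        exact (h1.sub h2).hasDerivWithinAt
      · intro y hy
        have hyd : |y| < δ := by rw [abs_of_nonneg hy.1]; linarith [hy.2]
        have := hDc y 0 hyd (by simpa using hδ)
        rw [abs_of_nonneg hy.1] at this
        rw [Real.norm_eq_abs]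
        linarith [hy.2]
      · simp [hw0.le]
      · simp [hw0.le]
    have h0 := hb 0 0 (by simpa using hρ) (by simpa using hρ)
    have hw3 := hb w 0 (by rw [abs_of_pos hw0]; linarith) (by simpa using hρ)
    have h00 : f (0,0,0) = 0 := by simpa using h0
    simp only [h00, Real.norm_eq_abs, sub_zero, abs_of_pos hw0] at hmv hw3
    have hKw : K*w^3 ≤ 1/100*w^2 := by
      have : K*w ≤ 1/100 := by nlinarith
      nlinarith [sq_nonneg w]
    have h5 : |c*w^2/2| ≤ 2/100*w^2 := by
      rw [abs_le] at hmv hw3 ⊢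
      norm_num at hmv
      constructor <;> nlinarith [hmv.1, hmv.2, hw3.1, hw3.2]
    rw [abs_div, abs_mul, abs_of_pos (show 0 < w^2 by positivity)] at h5
    norm_num at h5
    have : 0 < w^2 := by positivity
    by_contra hcon
    push Not at hcon
    nlinarith
  refine ⟨δ, hδ, fun y z α r hα hy hz hr => ?_⟩
  have := Convex.norm_image_sub_le_of_norm_hasDerivWithin_le (𝕜 := ℝ)
        (f := fun y => y*f (0,y,α))
        (f' := fun y => 1*f (0,y,α) + y*D (0,y,α)) (s := Set.Icc (-r) r) (C := 3/10*r^2)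
        (x := z) (y := y) ?_ ?_ (convex_Icc _ _) (abs_le.1 hz) (abs_le.1 hy)
  · simpa using this
  · intro u hu
    have hu' := abs_le.2 hu
    exact ((hasDerivAt_id u).mul (hder u α (by linarith) (by linarith))).hasDerivWithinAt
  · intro u hu
    have hu' := abs_le.2 hu
    have hr0 : 0 ≤ r := (abs_nonneg _).trans hu'
    have h1 := hb u α (by linarith) (by linarith)
    have h2 := hDc u α (by linarith) (by linarith)
    have h3 : |D (0,u,α)| ≤ 5/100*|u| := by
      have : D (0,u,α) = (D (0,u,α) - c*u) + c*u := by ring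
      rw [this]
      refine (abs_add_le _ _).trans ?_
      rw [abs_mul c]
      nlinarith [abs_nonneg u]
    rw [Real.norm_eq_abs, one_mul]
    refine (abs_add_le _ _).trans ?_
    rw [abs_mul]
    have h4 : |u| * |D (0,u,α)| ≤ r*(5/100*r) := by
      refine mul_le_mul hu' (by linarith) (abs_nonneg _) hr0
    have h5 : K*|u|^3 ≤ 1/100*r^2 := by
      have : |u|^3 ≤ r^3 := pow_le_pow_left₀ (abs_nonneg _) hu' 3
      have h6 : K*r ≤ 1/100 := by nlinarith
      calc K*|u|^3 ≤ K*r^3 := by gcongr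
        _ = (K*r)*r^2 := by ring
        _ ≤ _ := by gcongr
    nlinarith [sq_nonneg r]

set_option maxHeartbeats 4000000 in
lemma core (a b s C K L : ℝ) (ha : 0 < a) (hb : 0 < b) (hs : 0 < s) (hs1 : s ≤ 1/10)
    (hsa : a*s^2 ≤ 1/2) (hC0 : 0 < C) (hC1 : C ≤ 1) (hbC : b*C^2 ≤ 1/20) (hK : 0 < K)
    (hMs : (16*K+1)*s ≤ 1/100) (hL : 0 ≤ L) (g1 g2 : ℝ → ℝ → ℝ)
    (h1 : ∀ x y, |x| ≤ C*s → |y| ≤ 11/10*s → |g1 x y| ≤ a/2*y^2)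
    (h2 : ∀ x y, |x| ≤ C*s → |y| ≤ 11/10*s → |g2 x y| ≤ 1/20*s^2)
    (h20 : ∀ y, |y| ≤ 11/10*s → |g2 0 y| ≤ K*|y|^3)
    (hx : ∀ x y, |x| ≤ C*s → |y| ≤ 11/10*s → |g2 x y - g2 0 y| ≤ L*|x|)
    (hy : ∀ y z, |y| ≤ 11/10*s → |z| ≤ 11/10*s → |y*g2 0 y - z*g2 0 z| ≤ 2/5*s^2*|y-z|)
    (F : ℝ × ℝ → ℝ × ℝ)
    (hF : ∀ x y, F (x,y) = ((1 - a*y^2 + g1 x y)*x, -(1 + s^2 + b*x^2 - y^2 + g2 x y)*y)) :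
    ∃ ξp ξm : ℝ, 0 < ξp ∧ ξm < 0 ∧
      F (0, ξp) = (0, ξm) ∧ F (0, ξm) = (0, ξp) ∧
      |ξp - s| ≤ (16*K+1)*s^2 ∧ |ξm + s| ≤ (16*K+1)*s^2 ∧
      ∀ x₀ y₀ : ℝ, 0 < |y₀| → |y₀| ≤ s → |x₀| ≤ C*s →
        ∃ C₄ : ℝ, 0 < C₄ ∧ ∀ t : ℕ,
          min (Real.sqrt ((F^[t] (x₀, y₀)).1 ^ 2 + ((F^[t] (x₀, y₀)).2 - ξp) ^ 2))
              (Real.sqrt ((F^[t] (x₀, y₀)).1 ^ 2 + ((F^[t] (x₀, y₀)).2 - ξm) ^ 2))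
            ≤ C₄ * (1 - min (1/2) (a/4) * s^2) ^ t := by
  have hs2 : s^2 ≤ 1/100 := by nlinarith
  have hs20 : 0 < s^2 := by positivity
  obtain ⟨M, hM⟩ : ∃ M, M = 16*K+1 := ⟨_, rfl⟩
  rw [← hM] at hMs ⊢
  have hM0 : 0 < M := by linarith
  have hMs2 : M*s^2 ≤ s/100 := by nlinarith
  have hMs20 : 0 < M*s^2 := by positivity
  -- the one-dimensional map
  obtain ⟨G, hG⟩ : ∃ G : ℝ → ℝ, ∀ y, G y = -(1+s^2-y^2+g2 0 y)*y := ⟨_, fun _ => rfl⟩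
  have hFG : ∀ y, F (0,y) = (0, G y) := by
    intro y; rw [hF, hG]; simp
  have Gneg : ∀ y ∈ Set.Icc (s-M*s^2) (s+M*s^2), -G y ∈ Set.Icc (s-M*s^2) (s+M*s^2) := by
    intro y hy'
    have hyp : 0 < y := by linarith [hy'.1]
    have hya : |y| = y := abs_of_pos hyp
    have hw := h20 y (by rw [hya]; linarith [hy'.2])
    rw [hya] at hw
    have := fixinv s y _ K M hs hs1 hK hM hMs hy'.1 hy'.2 hw
    rw [hG]
    constructor <;> linarith [this.1, this.2]
  have Gpos : ∀ y, -y ∈ Set.Icc (s-M*s^2) (s+M*s^2) → G y ∈ Set.Icc (s-M*s^2) (s+M*s^2) := by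
    intro y hy'
    have hyp : 0 < -y := by linarith [hy'.1]
    have hya : |y| = -y := abs_of_neg (by linarith)
    have hw := h20 y (by rw [hya]; linarith [hy'.2])
    rw [hya] at hw
    have := fixinv s (-y) _ K M hs hs1 hK hM hMs hy'.1 hy'.2 hw
    rw [hG]
    constructor <;> nlinarith [this.1, this.2]
  have Gcont : ContinuousOn G (Set.Icc (-(11/10*s)) (11/10*s)) := by
    have c1 : ContinuousOn (fun y => y*g2 0 y) (Set.Icc (-(11/10*s)) (11/10*s)) := by
      have : LipschitzOnWith (Real.toNNReal (2/5*s^2)) (fun y => y*g2 0 y)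
          (Set.Icc (-(11/10*s)) (11/10*s)) := by
        refine LipschitzOnWith.of_dist_le_mul ?_
        intro y hy1 z hz1
        rw [Real.dist_eq, Real.dist_eq, Real.coe_toNNReal _ (by positivity)]
        exact hy y z (abs_le.2 hy1) (abs_le.2 hz1)
      exact this.continuousOn
    have c2 : ContinuousOn (fun y : ℝ => -(1+s^2-y^2)*y) (Set.Icc (-(11/10*s)) (11/10*s)) := by
      fun_prop
    refine (c2.sub c1).congr ?_
    intro y _
    rw [hG]
    simp only [Pi.sub_apply]
    ring
  obtain ⟨ξp, hξp, hfix⟩ : ∃ c ∈ Set.Icc (s-M*s^2) (s+M*s^2), Function.IsFixedPt (fun y => G (G y)) c := by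
    refine exists_mem_Icc_isFixedPt_of_mapsTo ?_ (by linarith) ?_
    · refine Gcont.comp (Gcont.mono ?_) ?_
      · intro y hy'; constructor <;> linarith [hy'.1, hy'.2]
      · intro y hy'
        have := Gneg y hy'
        constructor <;> linarith [this.1, this.2]
    · intro y hy'
      exact Gpos _ (Gneg y hy')
  have hfix' : G (G ξp) = ξp := hfix
  obtain ⟨ξm, hξm⟩ : ∃ ξm, ξm = G ξp := ⟨_, rfl⟩
  have hξm' := Gneg ξp hξp
  rw [← hξm] at hfix' hξm'
  refine ⟨ξp, ξm, by linarith [hξp.1], by linarith [hξm'.1], ?_, ?_, ?_, ?_, ?_⟩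
  · rw [hFG, hξm]
  · rw [hFG, hfix']
  · rw [abs_le]; constructor <;> linarith [hξp.1, hξp.2]
  · rw [abs_le]; constructor <;> linarith [hξm'.1, hξm'.2]
  intro x₀ y₀ hy0 hy0s hx0
  -- orbit
  obtain ⟨X, hX⟩ : ∃ X : ℕ → ℝ, ∀ t, X t = (F^[t] (x₀,y₀)).1 := ⟨_, fun _ => rfl⟩
  obtain ⟨Y, hY⟩ : ∃ Y : ℕ → ℝ, ∀ t, Y t = (F^[t] (x₀,y₀)).2 := ⟨_, fun _ => rfl⟩
  have hstep : ∀ t, F^[t+1] (x₀,y₀) = F (X t, Y t) := by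
    intro t; rw [Function.iterate_succ_apply', hX, hY]
  have hX1 : ∀ t, X (t+1) = (1 - a*Y t^2 + g1 (X t) (Y t))*X t := by
    intro t; rw [hX (t+1), hstep, hF]
  have hY1 : ∀ t, Y (t+1) = -(1 + s^2 + b*X t^2 - Y t^2 + g2 (X t) (Y t))*Y t := by
    intro t; rw [hY (t+1), hstep, hF]
  have hX0 : X 0 = x₀ := by rw [hX]; rfl
  have hY0 : Y 0 = y₀ := by rw [hY]; rfl
  simp only [← hX, ← hY]
  -- single-step facts
  have hw : ∀ x y, |x| ≤ C*s → |y| ≤ 11/10*s → |b*x^2 + g2 x y| ≤ s^2/10 := by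
    intro x y hx' hy'
    have e1 : b*x^2 ≤ 1/20*s^2 := by
      have : x^2 ≤ (C*s)^2 := by
        rw [← sq_abs x]; exact pow_le_pow_left₀ (abs_nonneg _) hx' 2
      calc b*x^2 ≤ b*(C*s)^2 := by gcongr
        _ = (b*C^2)*s^2 := by ring
        _ ≤ _ := by gcongr
    have e2 : 0 ≤ b*x^2 := by positivity
    have e3 := abs_le.1 (h2 x y hx' hy')
    rw [abs_le]; constructor <;> linarith [e3.1, e3.2]
  have hxc : ∀ x y, |x| ≤ C*s → |y| ≤ 11/10*s →
      |(1 - a*y^2 + g1 x y)*x| ≤ (1 - a/2*y^2)*|x| := by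
    intro x y hx' hy'
    rw [abs_mul]
    refine mul_le_mul_of_nonneg_right ?_ (abs_nonneg _)
    have e := abs_le.1 (h1 x y hx' hy')
    have e1 : y^2 ≤ 121/100*s^2 := by
      have := pow_le_pow_left₀ (abs_nonneg y) hy' 2
      rw [sq_abs] at this; nlinarith
    have e2 : a*y^2 ≤ 1 := by nlinarith
    rw [abs_le]; constructor <;> linarith [e.1, e.2]
  have hYabs : ∀ t, |X t| ≤ C*s → |Y t| ≤ 11/10*s → 
      |Y (t+1)| = (1 + s^2 - |Y t|^2 + (b*X t^2 + g2 (X t) (Y t)))*|Y t| := by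
    intro t hx' hy'
    have := (inv_up s (|Y t|) _ hs hs1 (abs_nonneg _) hy' (hw _ _ hx' hy')).1
    rw [hY1, abs_mul, abs_neg]
    congr 1
    rw [sq_abs] at this ⊢
    rw [abs_of_pos (by linarith)]; ring
  have hinv : ∀ t, |X t| ≤ C*s ∧ |Y t| ≤ 11/10*s := by
    intro t
    induction t with
    | zero => rw [hX0, hY0]; exact ⟨hx0, by linarith⟩
    | succ t ih =>
      obtain ⟨i1, i2⟩ := ih
      constructor
      · rw [hX1]
        refine (hxc _ _ i1 i2).trans (le_trans ?_ i1)
        have : 0 ≤ a/2*Y t^2*|X t| := by positivity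
        linarith
      · rw [hYabs t i1 i2]
        exact (inv_up s (|Y t|) _ hs hs1 (abs_nonneg _) i2 (hw _ _ i1 i2)).2
  have hlow : ∀ t, 9/10*s ≤ |Y t| → 9/10*s ≤ |Y (t+1)| := by
    intro t ht
    obtain ⟨i1, i2⟩ := hinv t
    rw [hYabs t i1 i2]
    exact inv_low s _ _ hs hs1 ht i2 (hw _ _ i1 i2)
  obtain ⟨T, hT⟩ : ∃ T, 9/10*s ≤ |Y T| := by
    by_contra hcon
    push Not at hcon
    have hg : ∀ t, (1+9/100*s^2)^t*|y₀| ≤ |Y t| := by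
      intro t
      induction t with
      | zero => simp [hY0]
      | succ t ih =>
        obtain ⟨i1, i2⟩ := hinv t
        rw [hYabs t i1 i2]
        refine le_trans ?_ (grow s _ _ hs (abs_nonneg _) (hcon t).le (hw _ _ i1 i2))
        rw [pow_succ']
        have := mul_le_mul_of_nonneg_left ih (show 0 ≤ 1+9/100*s^2 by positivity)
        linarith
    obtain ⟨n, hn⟩ := pow_unbounded_of_one_lt (s/|y₀|) (show 1 < 1+9/100*s^2 by linarith)
    rw [div_lt_iff₀ hy0] at hn
    linarith [hg n, hcon n]
  have hTlow : ∀ n, 9/10*s ≤ |Y (T+n)| := by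
    intro n
    induction n with
    | zero => exact hT
    | succ n ih => exact hlow _ ih
  obtain ⟨c3, hc3⟩ : ∃ c3, c3 = min (1/2) (a/4) := ⟨_, rfl⟩
  have hc3a : c3 ≤ 1/2 := by rw [hc3]; exact min_le_left _ _
  have hc3b : c3 ≤ a/4 := by rw [hc3]; exact min_le_right _ _
  have hc3p : 0 < c3 := by rw [hc3]; positivity
  rw [← hc3]
  obtain ⟨q, hq⟩ : ∃ q, q = 1 - c3*s^2 := ⟨_, rfl⟩
  rw [← hq]
  have hc3s : c3*s^2 ≤ 1/2*s^2 := mul_le_mul_of_nonneg_right hc3a hs20.le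
  have hc3s0 : 0 < c3*s^2 := mul_pos hc3p hs20
  have hq0 : 0 < q := by linarith
  have hq1 : q ≤ 1 := by linarith
  have hXd : ∀ n, |X (T+n)| ≤ s*q^n := by
    intro n
    induction n with
    | zero =>
      simp only [add_zero, pow_zero, mul_one]
      have := (hinv T).1
      nlinarith
    | succ n ih =>
      obtain ⟨i1, i2⟩ := hinv (T+n)
      rw [← add_assoc, hX1]
      refine (hxc _ _ i1 i2).trans ?_
      have l := pow_le_pow_left₀ (by positivity) (hTlow n) 2
      rw [sq_abs] at l
      have : 1 - a/2*Y (T+n)^2 ≤ q := by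
        rw [hq]
        have m1 : c3*s^2 ≤ a/4*s^2 := mul_le_mul_of_nonneg_right hc3b hs20.le
        have m2 := mul_le_mul_of_nonneg_left l (show 0 ≤ a/2 by positivity)
        have m3 : 0 < a*s^2 := by positivity
        linarith
      calc (1 - a/2*Y (T+n)^2)*|X (T+n)| ≤ q*(s*q^n) :=
            mul_le_mul this ih (abs_nonneg _) hq0.le
        _ = _ := by ring
  -- one step of contraction
  have hcs : ∀ x y z, |x| ≤ C*s → |y| ≤ 11/10*s → |z| ≤ 11/10*s → 81/100*s^2 ≤ y*z →
      |-(1 + s^2 + b*x^2 - y^2 + g2 x y)*y - G z| ≤ (1-s^2)*|y-z| + (b+L)*|x| := by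
    intro x y z hx' hy' hz' hyz
    have e1 : y^2 ≤ 121/100*s^2 := by
      have := pow_le_pow_left₀ (abs_nonneg y) hy' 2
      rw [sq_abs] at this; nlinarith
    have e2 : z^2 ≤ 121/100*s^2 := by
      have := pow_le_pow_left₀ (abs_nonneg z) hz' 2
      rw [sq_abs] at this; nlinarith
    have k := contr s y z (g2 0 y) (g2 0 z) hs hs1 e1 e2 hyz (hy y z hy' hz')
    rw [hG]
    have e : -(1 + s^2 + b*x^2 - y^2 + g2 x y)*y - -(1+s^2-z^2+g2 0 z)*z
      = (-(1+s^2-y^2+g2 0 y)*y - -(1+s^2-z^2+g2 0 z)*z) + (-(b*x^2 + (g2 x y - g2 0 y))*y) := by ring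
    rw [e]
    refine (abs_add_le _ _).trans (add_le_add k ?_)
    rw [abs_mul, abs_neg]
    have k1 : |b*x^2 + (g2 x y - g2 0 y)| ≤ (b+L)*|x| := by
      refine (abs_add_le _ _).trans ?_
      have := hx x y hx' hy'
      rw [abs_mul, abs_of_pos hb, abs_pow]
      have hx1 : |x| ≤ 1 := by nlinarith
      have h22 : |x|^2 ≤ |x| := by
        rw [sq]; exact mul_le_of_le_one_left (abs_nonneg x) hx1
      have h23 := mul_le_mul_of_nonneg_left h22 hb.le
      linarith
    have k2 : |y| ≤ 1 := by linarith
    calc _ ≤ ((b+L)*|x|)*1 := mul_le_mul k1 k2 (abs_nonneg _) (by positivity)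
      _ = _ := by ring
  obtain ⟨E, hE⟩ : ∃ E, E = 3*s + 2*(b+L)*s/s^2 := ⟨_, rfl⟩
  have hE3 : 3*s ≤ E := by rw [hE]; linarith [show 0 ≤ 2*(b+L)*s/s^2 by positivity]
  have hEL : (b+L)*s ≤ E*(s^2/2) := by
    have : 2*(b+L)*s/s^2*(s^2/2) = (b+L)*s := by field_simp
    rw [hE]
    have h3 := mul_pos hs hs20
    rw [add_mul (3*s), this]
    linarith
  have hEstep : ∀ n d x, |d| ≤ E*q^n → |x| ≤ s*q^n → (1-s^2)*|d| + (b+L)*|x| ≤ E*q^(n+1) := by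
    intro n d x hd hx'
    have hqn : 0 < q^n := by positivity
    have i1 : (1-s^2)*|d| ≤ (1-s^2)*(E*q^n) := mul_le_mul_of_nonneg_left hd (by linarith)
    have i2 : (b+L)*|x| ≤ (b+L)*(s*q^n) := mul_le_mul_of_nonneg_left hx' (by positivity)
    have i3 : (b+L)*s*q^n ≤ E*(s^2/2)*q^n := mul_le_mul_of_nonneg_right hEL hqn.le
    have i4 : (1 - s^2/2)*(E*q^n) ≤ q*(E*q^n) := by
      refine mul_le_mul_of_nonneg_right ?_ (mul_nonneg (by linarith) hqn.le)
      rw [hq]; linarith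
    rw [pow_succ q n]
    generalize q^n = Q at i1 i2 i3 i4 ⊢
    nlinarith only [i1, i2, i3, i4]
  have hξpa : |ξp| ≤ 11/10*s := by rw [abs_le]; constructor <;> linarith [hξp.1, hξp.2]
  have hξma : |ξm| ≤ 11/10*s := by rw [abs_le]; constructor <;> linarith [hξm'.1, hξm'.2]
  have hsgn : ∀ n, (0 < Y (T+n) ∧ |Y (T+n) - ξp| ≤ E*q^n) ∨ (Y (T+n) < 0 ∧ |Y (T+n) - ξm| ≤ E*q^n) := by
    intro n
    induction n with
    | zero =>
      have i2 := abs_le.1 (hinv T).2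
      simp only [add_zero, pow_zero, mul_one]
      rcases lt_or_ge 0 (Y T) with h | h
      · left; refine ⟨h, le_trans ?_ hE3⟩
        rw [abs_le]; constructor <;> linarith [hξp.1, hξp.2, i2.1, i2.2]
      · right; refine ⟨lt_of_le_of_ne h ?_, le_trans ?_ hE3⟩
        · intro h0; rw [h0] at hT; simp at hT; linarith
        rw [abs_le]; constructor <;> linarith [hξm'.1, hξm'.2, i2.1, i2.2]
    | succ n ih =>
      obtain ⟨i1, i2⟩ := hinv (T+n)
      have hl := hTlow n
      have hm := (inv_up s (|Y (T+n)|) _ hs hs1 (abs_nonneg _) i2 (hw _ _ i1 i2)).1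
      rw [sq_abs] at hm
      rw [← add_assoc, hY1]
      rcases ih with ⟨hp, hd⟩ | ⟨hp, hd⟩
      · right
        constructor
        · nlinarith
        · rw [abs_of_pos hp] at hl
          have := hcs _ _ ξp i1 i2 hξpa (by nlinarith [hξp.1])
          rw [← hξm] at this
          exact this.trans (hEstep n _ _ hd (hXd n))
      · left
        constructor
        · nlinarith
        · rw [abs_of_neg hp] at hl
          have := hcs _ _ ξm i1 i2 hξma (by nlinarith [hξm'.1])
          rw [hfix'] at this
          exact this.trans (hEstep n _ _ hd (hXd n))
  have hsq : ∀ u v : ℝ, Real.sqrt (u^2+v^2) ≤ |u| + |v| := by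
    intro u v
    refine Real.sqrt_le_iff.2 ⟨by positivity, ?_⟩
    nlinarith [sq_abs u, sq_abs v, mul_nonneg (abs_nonneg u) (abs_nonneg v)]
  have hqT : 0 < q^T := by positivity
  refine ⟨(s+E)/q^T, div_pos (by linarith) hqT, fun t => ?_⟩
  rcases le_total T t with h | h
  · obtain ⟨n, rfl⟩ := Nat.exists_eq_add_of_le h
    have e : (s+E)/q^T*q^(T+n) = s*q^n + E*q^n := by
      rw [pow_add]; field_simp
    rw [e]
    rcases hsgn n with ⟨_, hd⟩ | ⟨_, hd⟩
    · exact (min_le_left _ _).trans ((hsq _ _).trans (add_le_add (hXd n) hd))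
    · exact (min_le_right _ _).trans ((hsq _ _).trans (add_le_add (hXd n) hd))
  · refine (min_le_left _ _).trans ((hsq _ _).trans ?_)
    obtain ⟨i1, i2⟩ := hinv t
    have j1 : |X t| ≤ s := by nlinarith
    have j2 : |Y t - ξp| ≤ E := by
      have i2 := abs_le.1 i2
      refine le_trans ?_ hE3
      rw [abs_le]; constructor <;> linarith [hξp.1, hξp.2, i2.1, i2.2]
    have j3 : q^T ≤ q^t := pow_le_pow_of_le_one hq0.le hq1 h
    have j4 : s + E ≤ (s+E)/q^T*q^t := by
      rw [div_mul_eq_mul_div, le_div_iff₀ hqT]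
      exact mul_le_mul_of_nonneg_left j3 (by linarith)
    linarith

/-- Supercritical regime: convergence to a stable period-two orbit.
For small `α > 0` the map `F^{(α)}(x,y) = ((1-ay²+f₁)x, -(1+α+bx²-y²+f₂)y)` admits a
period-two orbit `{(0,ξ₊),(0,ξ₋)}` with `ξ± = ±√α + O(α)`, and iterates from suitable
initial points converge to this orbit at a linear rate. -/
theorem stmt_1
    (a b : ℝ) (ha : 0 < a) (hb : 0 < b)
    (f₁ f₂ : ℝ × ℝ × ℝ → ℝ)
    (hf₁ : AnalyticAt ℝ f₁ (0, 0, 0)) (hf₂ : AnalyticAt ℝ f₂ (0, 0, 0))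
    (K : ℝ) (hK : 0 < K)
    (hbound : ∃ ρ : ℝ, 0 < ρ ∧ ∀ x y α : ℝ, |x| < ρ → |y| < ρ → |α| < ρ →
      |f₁ (x, y, α)| ≤ K * (|y| ^ 3 + |x| * y ^ 2) ∧
      |f₂ (x, y, α)| ≤ K * (|x| ^ 3 + |y| ^ 3))
    (F : ℝ → ℝ × ℝ → ℝ × ℝ)
    (hF : ∀ α x y : ℝ,
      F α (x, y) = ((1 - a * y ^ 2 + f₁ (x, y, α)) * x,
                    -(1 + α + b * x ^ 2 - y ^ 2 + f₂ (x, y, α)) * y)) :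
    ∃ ᾱ C₀ C₁ C₂ C₃ : ℝ, 0 < ᾱ ∧ 0 < C₀ ∧ 0 < C₁ ∧ 0 < C₂ ∧ 0 < C₃ ∧
      ∀ α : ℝ, 0 < α → α ≤ ᾱ →
        ∃ ξp ξm : ℝ, 0 < ξp ∧ ξm < 0 ∧
          F α (0, ξp) = (0, ξm) ∧ F α (0, ξm) = (0, ξp) ∧
          |ξp - Real.sqrt α| ≤ C₀ * α ∧ |ξm + Real.sqrt α| ≤ C₀ * α ∧
          ∀ x₀ y₀ : ℝ, 0 < |y₀| → |y₀| ≤ C₁ * Real.sqrt α → |x₀| ≤ C₂ * Real.sqrt α →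
            ∃ C₄ : ℝ, 0 < C₄ ∧ ∀ t : ℕ,
              min (Real.sqrt (((F α)^[t] (x₀, y₀)).1 ^ 2 + (((F α)^[t] (x₀, y₀)).2 - ξp) ^ 2))
                  (Real.sqrt (((F α)^[t] (x₀, y₀)).1 ^ 2 + (((F α)^[t] (x₀, y₀)).2 - ξm) ^ 2))
                ≤ C₄ * (1 - C₃ * α) ^ t := by
  obtain ⟨ρ, hρ, hbd⟩ := hbound
  obtain ⟨δ1, hδ1, L, hL, hlx⟩ := lip_x f₂ hf₂
  obtain ⟨δ2, hδ2, hly⟩ := lip_y f₂ hf₂ K ρ hK hρ (fun y α hy hα => by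
    simpa using (hbd 0 y α (by simpa using hρ) hy hα).2)
  obtain ⟨C, hC0, hC1, hbC⟩ : ∃ C : ℝ, 0 < C ∧ C ≤ 1 ∧ b*C^2 ≤ 1/20 := by
    refine ⟨min 1 (1/(20*b)), by positivity, min_le_left _ _, ?_⟩
    have h1 : min 1 (1/(20*b)) ≤ 1 := min_le_left _ _
    have h2 : min 1 (1/(20*b)) ≤ 1/(20*b) := min_le_right _ _
    have h0 : 0 < min 1 (1/(20*b)) := by positivity
    generalize min 1 (1/(20*b)) = C at *
    calc b*C^2 ≤ b*C := by gcongr; nlinarith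
      _ ≤ b*(1/(20*b)) := by gcongr
      _ = 1/20 := by field_simp
  obtain ⟨σ, hσ, k1, k2, k3, k4, k5, k6, k7⟩ : ∃ σ : ℝ, 0 < σ ∧ σ ≤ 1/10 ∧ a*σ ≤ 1/2 ∧
      (100*K+1)*σ ≤ 1/100 ∧ 2*σ < ρ ∧ 2*σ < δ1 ∧ 2*σ < δ2 ∧ 5*K*σ ≤ a := by
    have key : ∀ᶠ σ : ℝ in nhdsWithin 0 (Set.Ioi 0), 0 < σ ∧ σ < 1/10 ∧ a*σ < 1/2 ∧
      (100*K+1)*σ < 1/100 ∧ 2*σ < ρ ∧ 2*σ < δ1 ∧ 2*σ < δ2 ∧ 5*K*σ < a := by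
      have lt : ∀ c d : ℝ, 0 < d → ∀ᶠ σ : ℝ in nhdsWithin 0 (Set.Ioi 0), c*σ < d := by
        intro c d hd
        refine Filter.Eventually.filter_mono nhdsWithin_le_nhds ?_
        have : Filter.Tendsto (fun σ : ℝ => c*σ) (nhds 0) (nhds (c*0)) :=
          (continuous_const.mul continuous_id).tendsto 0
        rw [mul_zero] at this
        exact this.eventually_lt_const hd
      filter_upwards [self_mem_nhdsWithin, lt 1 (1/10) (by norm_num), lt a (1/2) (by norm_num),
        lt (100*K+1) (1/100) (by norm_num), lt 2 ρ hρ, lt 2 δ1 hδ1, lt 2 δ2 hδ2, lt (5*K) a ha]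
        with σ e0 e1 e2 e3 e4 e5 e6 e7
      exact ⟨e0, by linarith, e2, e3, e4, e5, e6, e7⟩
    obtain ⟨σ, e0, e1, e2, e3, e4, e5, e6, e7⟩ := key.exists
    exact ⟨σ, e0, e1.le, e2.le, e3.le, e4, e5, e6, e7.le⟩
  refine ⟨σ^2, 16*K+1, 1, C, min (1/2) (a/4), by positivity, by positivity, one_pos, hC0,
    by positivity, ?_⟩
  intro α hα hασ
  obtain ⟨s, hs⟩ : ∃ s, s = Real.sqrt α := ⟨_, rfl⟩
  have hs0 : 0 < s := by rw [hs]; exact Real.sqrt_pos.2 hα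
  have hsα : α = s^2 := by rw [hs, Real.sq_sqrt hα.le]
  have hsσ : s ≤ σ := by rw [hs]; exact Real.sqrt_le_iff.2 ⟨hσ.le, hασ⟩
  have hs1 : s ≤ 1/10 := hsσ.trans k1
  have hs2s : s^2 ≤ s := by nlinarith
  rw [← hs]
  subst hsα
  rw [one_mul]
  have hKs : (100*K+1)*s ≤ 1/100 := le_trans (by gcongr) k3
  have hKsa : 5*K*s ≤ a := le_trans (by gcongr) k7
  have hα' : |s^2| = s^2 := abs_of_pos hα
  have hCs : ∀ x, |x| ≤ C*s → |x| ≤ s := fun x h => by nlinarith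
  refine core a b s C K L ha hb hs0 hs1 ?_ hC0 hC1 hbC hK ?_ hL
    (fun x y => f₁ (x,y,s^2)) (fun x y => f₂ (x,y,s^2)) ?_ ?_ ?_ ?_ ?_ (F (s^2)) (fun x y => hF _ x y)
  · nlinarith
  · nlinarith
  · intro x y hx hy
    have hx := hCs x hx
    refine (hbd x y (s^2) (by linarith) (by linarith) (by rw [hα']; linarith)).1.trans ?_
    have : K*(|y|^3+|x| * y^2) = K*(|y|+|x|)*y^2 := by rw [← sq_abs y]; ring
    rw [this]
    refine mul_le_mul_of_nonneg_right ?_ (sq_nonneg y)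
    nlinarith
  · intro x y hx hy
    have hx := hCs x hx
    refine (hbd x y (s^2) (by linarith) (by linarith) (by rw [hα']; linarith)).2.trans ?_
    have a1 := pow_le_pow_left₀ (abs_nonneg x) hx 3
    have a2 := pow_le_pow_left₀ (abs_nonneg y) hy 3
    have a3 : |x|^3+|y|^3 ≤ 5*s^3 := by nlinarith [pow_pos hs0 3]
    calc K*(|x|^3+|y|^3) ≤ K*(5*s^3) := by gcongr
      _ = (5*K*s)*s^2 := by ring
      _ ≤ _ := by
        refine mul_le_mul_of_nonneg_right ?_ (sq_nonneg s)
        nlinarith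
  · intro y hy
    simpa using (hbd 0 y (s^2) (by simpa using hρ) (by linarith) (by rw [hα']; linarith)).2
  · intro x y hx hy
    have hx := hCs x hx
    exact hlx x y (s^2) (by linarith) (by linarith) (by rw [hα']; linarith)
  · intro y z hy hz
    refine (hly y z (s^2) (11/10*s) (by rw [hα']; linarith) hy hz (by linarith)).trans ?_
    refine mul_le_mul_of_nonneg_right ?_ (abs_nonneg _)
    nlinarith
end

section
/- Let m₁, m₂ be natural numbers with m₁ + m₂ = p, let U ⊆ ℝ^{m₁} × ℝ^{m₂} be open, and let g : U → ℝ^p be a C³ map that is injective on U and whose derivative Dg(x,y) is invertible at every (x,y) ∈ U, and suppose that the pure second and third derivatives of g in the second variable vanish identically on U: D²g(x,y)[(0,w₁),(0,w₂)] = 0 and D³g(x,y)[(0,w₁),(0,w₂),(0,w₃)] = 0 for all (x,y) ∈ U and all w₁, w₂, w₃ ∈ ℝ^{m₂}. Let g⁻¹ : g(U) → U denote the inverse. Then for every (x,y) ∈ U there exist δ > 0 and C > 0 such that for all v ∈ ℝ^p with ‖v‖ < δ, writing z := g(x,y) and (v_x, v_y) := Dg(x,y)⁻¹[v] ∈ ℝ^{m₁}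 × ℝ^{m₂}: z + v ∈ g(U) and ‖g⁻¹(z + v) − g⁻¹(z) − Dg⁻¹(z)[v] − (1/2)D²g⁻¹(z)[v,v]‖ ≤ C(‖v_x‖³ + ‖v_x‖²‖v_y‖ + ‖v_x‖‖v_y‖²). -/
open Topology in
/-- First order Taylor estimate for a `C²` map. -/
theorem aux_taylor_one {E F : Type*} [NormedAddCommGroup E] [NormedSpace ℝ E]
    [NormedAddCommGroup F] [NormedSpace ℝ F] (G : E → F) (z : E) (hG : ContDiffAt ℝ 2 G z) :
    ∃ K ρ : ℝ, 0 ≤ K ∧ 0 < ρ ∧ ∀ y, ‖y - z‖ < ρ →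
      ‖G y - G z - fderiv ℝ G z (y - z)‖ ≤ K * ‖y - z‖ * ‖y - z‖ := by
  have h1 : ContDiffAt ℝ 1 (fderiv ℝ G) z := hG.fderiv_right (by norm_num)
  obtain ⟨K, t, ht, hL⟩ := h1.exists_lipschitzOnWith
  have hd : ∀ᶠ y in 𝓝 z, DifferentiableAt ℝ G y := by
    filter_upwards [hG.eventually (by simp)] with y hy
    exact hy.differentiableAt (by norm_num)
  obtain ⟨ρ, hρ, hball⟩ := Metric.eventually_nhds_iff_ball.1 (hd.and ht)
  refine ⟨K, ρ, K.2, hρ, fun y hy => ?_⟩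
  have hsub : ∀ x ∈ Metric.closedBall z ‖y - z‖, x ∈ Metric.ball z ρ := by
    intro x hx
    rw [Metric.mem_ball]
    exact lt_of_le_of_lt hx hy
  refine (convex_closedBall z ‖y - z‖).norm_image_sub_le_of_norm_hasFDerivWithin_le'
    (f' := fderiv ℝ G) (fun x hx => ((hball x (hsub x hx)).1.hasFDerivAt).hasFDerivWithinAt)
    (fun x hx => ?_) (by simp) (by simp [dist_eq_norm])
  have h2 := hL.dist_le_mul x (hball x (hsub x hx)).2 z (mem_of_mem_nhds ht)
  rw [dist_eq_norm] at h2
  exact h2.trans (mul_le_mul_of_nonneg_left hx K.2)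

open Topology in
/-- Lipschitz estimate for the second order Taylor remainder of a `C³` map. -/
theorem aux_remainder {E F : Type*} [NormedAddCommGroup E] [NormedSpace ℝ E]
    [NormedAddCommGroup F] [NormedSpace ℝ F] (f : E → F) (z : E) (hf : ContDiffAt ℝ 3 f z) :
    ∃ K ρ : ℝ, 0 ≤ K ∧ 0 < ρ ∧ ∀ (M : ℝ) (a b : E), M < ρ → ‖a‖ ≤ M → ‖b‖ ≤ M →
      ‖(f (z + b) - f z - fderiv ℝ f z b - (1 / 2 : ℝ) • fderiv ℝ (fderiv ℝ f) z b b) -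
        (f (z + a) - f z - fderiv ℝ f z a - (1 / 2 : ℝ) • fderiv ℝ (fderiv ℝ f) z a a)‖
        ≤ K * M * M * ‖b - a‖ := by
  have h2 : ContDiffAt ℝ 2 (fderiv ℝ f) z := hf.fderiv_right (by norm_num)
  obtain ⟨K, ρ₁, hK, hρ₁, hT⟩ := aux_taylor_one (fderiv ℝ f) z h2
  have hd : ∀ᶠ y in 𝓝 z, DifferentiableAt ℝ f y := by
    filter_upwards [hf.eventually (by simp)] with y hy
    exact hy.differentiableAt (by norm_num)
  obtain ⟨ρ₂, hρ₂, hball⟩ := Metric.eventually_nhds_iff_ball.1 hd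
  have hsymm : IsSymmSndFDerivAt ℝ f z :=
    hf.isSymmSndFDerivAt (by rw [minSmoothness_of_isRCLikeNormedField]; norm_num)
  refine ⟨K, min ρ₁ ρ₂, hK, lt_min hρ₁ hρ₂, fun M a b hM ha hb => ?_⟩
  have hM1 := hM.trans_le (min_le_left _ _)
  have hM2 := hM.trans_le (min_le_right _ _)
  refine (convex_closedBall (0 : E) M).norm_image_sub_le_of_norm_hasFDerivWithin_le (𝕜 := ℝ)
    (f := fun u => f (z + u) - f z - fderiv ℝ f z u -
      (1 / 2 : ℝ) • fderiv ℝ (fderiv ℝ f) z u u)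
    (f' := fun u => fderiv ℝ f (z + u) - fderiv ℝ f z - fderiv ℝ (fderiv ℝ f) z u)
    (fun u hu => ?_) (fun u hu => ?_) (by simpa using ha) (by simpa using hb)
  · have hu' : ‖u‖ ≤ M := by simpa using hu
    have hdu : HasFDerivAt f (fderiv ℝ f (z + u)) (z + u) :=
      (hball (z + u) (by simpa using lt_of_le_of_lt hu' hM2)).hasFDerivAt
    have e1 : HasFDerivAt (fun u => f (z + u)) (fderiv ℝ f (z + u)) u := by
      have := hdu.comp u ((hasFDerivAt_id u).const_add z)
      rw [ContinuousLinearMap.comp_id] at this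
      exact this
    have e2 : HasFDerivAt (fun u => fderiv ℝ f z u) (fderiv ℝ f z) u :=
      (fderiv ℝ f z).hasFDerivAt
    have e3 : HasFDerivAt (fun u => fderiv ℝ (fderiv ℝ f) z u u)
        (((fderiv ℝ (fderiv ℝ f) z u).comp (ContinuousLinearMap.id ℝ E)) +
          (fderiv ℝ (fderiv ℝ f) z).flip u) u :=
      (fderiv ℝ (fderiv ℝ f) z).hasFDerivAt.clm_apply (hasFDerivAt_id u)
    have e4 := ((e1.sub_const (f z)).sub e2).sub (e3.const_smul (1 / 2 : ℝ))
    refine (e4.congr_fderiv ?_).hasFDerivWithinAt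
    ext k
    have hs := hsymm.eq k u
    simp only [sub_apply, smul_apply,
      add_apply, ContinuousLinearMap.comp_apply,
      ContinuousLinearMap.flip_apply, ContinuousLinearMap.id_apply, hs]
    rw [← two_smul ℝ, smul_smul]
    norm_num
  · have hu' : ‖u‖ ≤ M := by simpa using hu
    have := hT (z + u) (by simpa using lt_of_le_of_lt hu' hM1)
    simp only [add_sub_cancel_left] at this
    refine this.trans ?_
    gcongr
    exact mul_nonneg hK ((norm_nonneg _).trans hu')

open Topology in
/-- A map that is affine along a line has the expected first and second derivatives. -/
theorem aux_line {E F : Type*} [NormedAddCommGroup E] [NormedSpace ℝ E]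
    [NormedAddCommGroup F] [NormedSpace ℝ F] (f : E → F) (z v : E) (c w : F)
    (hf : ContDiffAt ℝ 2 f z) (h : ∀ᶠ s : ℝ in 𝓝 0, f (z + s • v) = c + s • w) :
    fderiv ℝ f z v = w ∧ fderiv ℝ (fderiv ℝ f) z v v = 0 := by
  have hl : ∀ s : ℝ, HasDerivAt (fun s : ℝ => z + s • v) v s := by
    intro s
    simpa using ((hasDerivAt_id s).smul_const v).const_add z
  have hcont : Filter.Tendsto (fun s : ℝ => z + s • v) (𝓝 0) (𝓝 z) := by
    have := (hl 0).continuousAt.tendsto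
    simpa using this
  have hd : ∀ᶠ y in 𝓝 z, DifferentiableAt ℝ f y := by
    filter_upwards [hf.eventually (by simp)] with y hy
    exact hy.differentiableAt (by norm_num)
  have key : ∀ᶠ s : ℝ in 𝓝 0, fderiv ℝ f (z + s • v) v = w := by
    filter_upwards [hcont.eventually hd, h.eventually_nhds] with s hs hs2
    have a1 : HasDerivAt (fun s : ℝ => f (z + s • v)) (fderiv ℝ f (z + s • v) v) s :=
      hs.hasFDerivAt.comp_hasDerivAt s (hl s)
    have a2 : HasDerivAt (fun s : ℝ => c + s • w) w s := by
      simpa using ((hasDerivAt_id s).smul_const w).const_add c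
    exact (a1.congr_of_eventuallyEq (Filter.EventuallyEq.symm hs2)).unique a2
  refine ⟨by simpa using key.self_of_nhds, ?_⟩
  have h1 : ContDiffAt ℝ 1 (fderiv ℝ f) z := hf.fderiv_right (by norm_num)
  have h1' : HasFDerivAt (fderiv ℝ f) (fderiv ℝ (fderiv ℝ f) z) (z + (0 : ℝ) • v) := by
    simpa using (h1.differentiableAt (by norm_num)).hasFDerivAt
  have a0 : HasDerivAt (fun s : ℝ => fderiv ℝ f (z + s • v))
      (fderiv ℝ (fderiv ℝ f) z v) 0 := h1'.comp_hasDerivAt (0 : ℝ) (hl 0)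
  have a1 : HasDerivAt (fun s : ℝ => fderiv ℝ f (z + s • v) v)
      (fderiv ℝ (fderiv ℝ f) z v v) 0 :=
    (ContinuousLinearMap.apply ℝ F v).hasFDerivAt.comp_hasDerivAt (0 : ℝ) a0
  have a2 : HasDerivAt (fun _ : ℝ => w) 0 0 := hasDerivAt_const _ _
  exact a1.unique (a2.congr_of_eventuallyEq key)

/-- If the pure second derivatives in the second variable vanish, the map is affine in it. -/
theorem aux_affine {E₁ E₂ F : Type*} [NormedAddCommGroup E₁] [NormedSpace ℝ E₁]
    [NormedAddCommGroup E₂] [NormedSpace ℝ E₂]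
    [NormedAddCommGroup F] [NormedSpace ℝ F] (g : E₁ × E₂ → F) (z : E₁ × E₂) (η : ℝ)
    (hη : 0 < η)
    (hg : ∀ y ∈ Metric.ball z η, ContDiffAt ℝ 3 g y)
    (h2 : ∀ y ∈ Metric.ball z η, ∀ w₁ w₂ : E₂,
      fderiv ℝ (fderiv ℝ g) y ((0 : E₁), w₁) ((0 : E₁), w₂) = 0) :
    ∀ w : E₂, ‖w‖ < η → g (z + ((0 : E₁), w)) = g z + fderiv ℝ g z ((0 : E₁), w) := by
  have hmem : ∀ w ∈ Metric.ball (0 : E₂) η, z + ((0 : E₁), w) ∈ Metric.ball z η := by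
    intro w hw
    simpa [Prod.norm_def, hη] using hw
  have h0 : (0 : E₂) ∈ Metric.ball (0 : E₂) η := by simpa using hη
  let J : E₂ →L[ℝ] E₁ × E₂ := ContinuousLinearMap.inr ℝ E₁ E₂
  have hl : ∀ w : E₂, HasFDerivAt (fun w : E₂ => z + ((0 : E₁), w)) J w := by
    intro w
    exact J.hasFDerivAt.const_add z
  have step1 : ∀ w ∈ Metric.ball (0 : E₂) η,
      (fderiv ℝ g (z + ((0 : E₁), w))).comp J = (fderiv ℝ g z).comp J := by
    intro w hw
    have := (convex_ball (0 : E₂) η).norm_image_sub_le_of_norm_hasFDerivWithin_le (𝕜 := ℝ)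
      (f := fun w => (fderiv ℝ g (z + ((0 : E₁), w))).comp J) (C := 0)
      (f' := fun _ => 0) (fun u hu => ?_) (by simp) h0 hw
    · have h3 : fderiv ℝ g (z + ((0 : E₁), w)) ∘SL J
          - fderiv ℝ g (z + ((0 : E₁), (0 : E₂))) ∘SL J = 0 := by
        simpa using this
      have h4 : z + ((0 : E₁), (0 : E₂)) = z := by
        rw [Prod.mk_zero_zero, add_zero]
      rw [h4] at h3
      exact sub_eq_zero.1 h3
    · have hc : ContDiffAt ℝ 1 (fderiv ℝ g) (z + ((0 : E₁), u)) :=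
        (hg _ (hmem u hu)).fderiv_right (by norm_num)
      have a1 := ((hc.differentiableAt (by norm_num)).hasFDerivAt.comp u (hl u)).clm_comp
        (hasFDerivAt_const J u)
      refine (a1.congr_fderiv ?_).hasFDerivWithinAt
      ext k l
      have := h2 _ (hmem u hu) k l
      simpa [J] using this
  intro w hw
  have hw' : w ∈ Metric.ball (0 : E₂) η := by simpa using hw
  have := (convex_ball (0 : E₂) η).norm_image_sub_le_of_norm_hasFDerivWithin_le' (𝕜 := ℝ)
      (f := fun w => g (z + ((0 : E₁), w))) (C := 0) (φ := (fderiv ℝ g z).comp J)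
      (f' := fun w => (fderiv ℝ g (z + ((0 : E₁), w))).comp J) (fun u hu => ?_)
      (fun u hu => ?_) h0 hw'
  · have h4 : z + ((0 : E₁), (0 : E₂)) = z := by
      rw [Prod.mk_zero_zero, add_zero]
    rw [h4, zero_mul, norm_le_zero_iff, sub_zero, sub_sub, sub_eq_zero] at this
    exact this
  · exact ((((hg _ (hmem u hu)).differentiableAt (by norm_num)).hasFDerivAt.comp u
      (hl u))).hasFDerivWithinAt
  · rw [step1 u hu]; simp

open Topology in
/-- Local smoothness of the inverse. -/
theorem aux_inverse {E F : Type*} [NormedAddCommGroup E] [NormedSpace ℝ E] [CompleteSpace E]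
    [NormedAddCommGroup F] [NormedSpace ℝ F] (g : E → F) (U : Set E) (hU : IsOpen U)
    (ginv : F → E) (hginv : ∀ z ∈ U, ginv (g z) = z) (z : E) (hz : z ∈ U)
    (A : E ≃L[ℝ] F) (hA : HasFDerivAt g (A : E →L[ℝ] F) z) (hg : ContDiffAt ℝ 3 g z) :
    ContDiffAt ℝ 3 ginv (g z) ∧ ∀ᶠ y in 𝓝 (g z), y ∈ g '' U := by
  have hn : (3 : WithTop ℕ∞) ≠ 0 := by norm_num
  have hs : HasStrictFDerivAt g (A : E →L[ℝ] F) z := hg.hasStrictFDerivAt' hA hn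
  have h1 : ContDiffAt ℝ 3 (hg.localInverse hA hn) (g z) := hg.to_localInverse hA hn
  have h2 : ∀ᶠ y in 𝓝 (g z), g (hg.localInverse hA hn y) = y := hs.eventually_right_inverse
  have h3 : ∀ᶠ y in 𝓝 (g z), hg.localInverse hA hn y ∈ U := by
    apply h1.continuousAt.eventually_mem
    rw [hg.localInverse_apply_image hA hn]
    exact hU.mem_nhds hz
  constructor
  · refine h1.congr_of_eventuallyEq ?_
    filter_upwards [h2, h3] with y h2 h3
    have := hginv _ h3
    rwa [h2] at this
  · filter_upwards [h2, h3] with y h2 h3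
    exact ⟨_, h3, h2⟩


/-- Sharpened second-order Taylor expansion of an inverse map.
If `g : U ⊆ ℝ^{m₁} × ℝ^{m₂} → ℝᵖ` is an injective `C³` map with invertible derivative
whose pure second and third derivatives in the second variable vanish on `U`, then the
second-order Taylor remainder of `g⁻¹` at `z = g(x,y)` is
`O(‖v_x‖³ + ‖v_x‖²‖v_y‖ + ‖v_x‖‖v_y‖²)`, where `(v_x, v_y) = Dg(x,y)⁻¹[v]`. -/
theorem stmt_9
    (m₁ m₂ p : ℕ) (hmp : m₁ + m₂ = p)
    (U : Set (EuclideanSpace ℝ (Fin m₁) × EuclideanSpace ℝ (Fin m₂)))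
    (hU : IsOpen U)
    (g : EuclideanSpace ℝ (Fin m₁) × EuclideanSpace ℝ (Fin m₂) → EuclideanSpace ℝ (Fin p))
    (hg : ContDiffOn ℝ 3 g U)
    (hinj : Set.InjOn g U)
    (hderiv : ∀ z ∈ U, Function.Bijective (fderiv ℝ g z))
    (h2 : ∀ z ∈ U, ∀ w₁ w₂ : EuclideanSpace ℝ (Fin m₂),
      iteratedFDeriv ℝ 2 g z ![((0 : EuclideanSpace ℝ (Fin m₁)), w₁),
        ((0 : EuclideanSpace ℝ (Fin m₁)), w₂)] = 0)
    (h3 : ∀ z ∈ U, ∀ w₁ w₂ w₃ : EuclideanSpace ℝ (Fin m₂),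
      iteratedFDeriv ℝ 3 g z ![((0 : EuclideanSpace ℝ (Fin m₁)), w₁),
        ((0 : EuclideanSpace ℝ (Fin m₁)), w₂), ((0 : EuclideanSpace ℝ (Fin m₁)), w₃)] = 0)
    (ginv : EuclideanSpace ℝ (Fin p) → EuclideanSpace ℝ (Fin m₁) × EuclideanSpace ℝ (Fin m₂))
    (hginv : ∀ z ∈ U, ginv (g z) = z) :
    ∀ z₀ ∈ U, ∃ δ C : ℝ, 0 < δ ∧ 0 < C ∧
      ∀ v : EuclideanSpace ℝ (Fin p), ‖v‖ < δ →
        ∀ (vx : EuclideanSpace ℝ (Fin m₁)) (vy : EuclideanSpace ℝ (Fin m₂)),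
          fderiv ℝ g z₀ (vx, vy) = v →
          (g z₀ + v) ∈ g '' U ∧
          ‖ginv (g z₀ + v) - ginv (g z₀) - fderiv ℝ ginv (g z₀) v -
              (1 / 2 : ℝ) • iteratedFDeriv ℝ 2 ginv (g z₀) ![v, v]‖
            ≤ C * (‖vx‖ ^ 3 + ‖vx‖ ^ 2 * ‖vy‖ + ‖vx‖ * ‖vy‖ ^ 2) := by
  intro z₀ hz₀
  have hgat : ∀ y ∈ U, ContDiffAt ℝ 3 g y := fun y hy => hg.contDiffAt (hU.mem_nhds hy)
  have hbij := hderiv z₀ hz₀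
  obtain ⟨A, hAeq⟩ : ∃ A : (EuclideanSpace ℝ (Fin m₁) × EuclideanSpace ℝ (Fin m₂)) ≃L[ℝ]
      EuclideanSpace ℝ (Fin p), (A : _ →L[ℝ] _) = fderiv ℝ g z₀ :=
    ⟨ContinuousLinearEquiv.ofBijective (fderiv ℝ g z₀) (LinearMap.ker_eq_bot.2 hbij.1)
      (LinearMap.range_eq_top.2 hbij.2), ContinuousLinearMap.ext fun _ => rfl⟩
  have hA : HasFDerivAt g (A : _ →L[ℝ] _) z₀ := by
    rw [hAeq]
    exact ((hgat z₀ hz₀).differentiableAt (by norm_num)).hasFDerivAt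
  obtain ⟨hinvC, hmemU⟩ := aux_inverse g U hU ginv hginv z₀ hz₀ A hA (hgat z₀ hz₀)
  obtain ⟨K, ρ, hK, hρ, hR⟩ := aux_remainder ginv (g z₀) hinvC
  obtain ⟨ρ', hρ', hball'⟩ := Metric.eventually_nhds_iff_ball.1 hmemU
  obtain ⟨η, hη, hηU⟩ := Metric.isOpen_iff.1 hU z₀ hz₀
  have haff := aux_affine g z₀ η hη (fun y hy => hgat y (hηU hy)) (fun y hy w₁ w₂ => by
    have := h2 y (hηU hy) w₁ w₂
    rw [iteratedFDeriv_two_apply] at this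
    simpa using this)
  set a : ℝ := ‖(A : (EuclideanSpace ℝ (Fin m₁) × EuclideanSpace ℝ (Fin m₂)) →L[ℝ] EuclideanSpace ℝ (Fin p))‖ with ha
  set b : ℝ := ‖(A.symm : EuclideanSpace ℝ (Fin p) →L[ℝ] (EuclideanSpace ℝ (Fin m₁) × EuclideanSpace ℝ (Fin m₂)))‖ with hb
  have ha0 : 0 ≤ a := norm_nonneg _
  have hb0 : 0 ≤ b := norm_nonneg _
  obtain ⟨κ, hκ, hκη, hκρ⟩ : ∃ κ : ℝ, 0 < κ ∧ κ ≤ η ∧ a * κ < ρ := by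
    refine ⟨min η (ρ / (a + 1)), by positivity, min_le_left _ _, ?_⟩
    calc a * min η (ρ / (a + 1)) ≤ a * (ρ / (a + 1)) := by
          gcongr; exact min_le_right _ _
      _ < (a + 1) * (ρ / (a + 1)) := by
          gcongr; linarith
      _ = ρ := by field_simp
  refine ⟨min ρ' (κ / (b + 1)), 2 * K * a ^ 3 + 1, by positivity, by positivity, ?_⟩
  intro v hv vx vy hvxy
  have hv1 : ‖v‖ < ρ' := hv.trans_le (min_le_left _ _)
  have hv2 : ‖v‖ < κ / (b + 1) := hv.trans_le (min_le_right _ _)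
  refine ⟨hball' _ (by simpa using hv1), ?_⟩
  have hAv : A (vx, vy) = v := by
    rw [← hvxy, ← hAeq]; rfl
  have hw : ‖(vx, vy)‖ < κ := by
    have h1 : (vx, vy) = A.symm v := by rw [← hAv]; simp
    calc ‖(vx, vy)‖ = ‖(A.symm : EuclideanSpace ℝ (Fin p) →L[ℝ] (EuclideanSpace ℝ (Fin m₁) × EuclideanSpace ℝ (Fin m₂))) v‖ := by rw [h1]; rfl
      _ ≤ b * ‖v‖ := ContinuousLinearMap.le_opNorm _ _
      _ ≤ (b + 1) * ‖v‖ := by gcongr; linarith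
      _ < (b + 1) * (κ / (b + 1)) := by gcongr
      _ = κ := by field_simp
  set n : ℝ := ‖(vx, vy)‖ with hn
  have hvy : ‖vy‖ ≤ n := norm_snd_le (vx, vy)
  have hAle : ∀ q, ‖A q‖ ≤ a * ‖q‖ := fun q =>
    ContinuousLinearMap.le_opNorm (A : (EuclideanSpace ℝ (Fin m₁) × EuclideanSpace ℝ (Fin m₂)) →L[ℝ] EuclideanSpace ℝ (Fin p)) q
  have hz0 : ∀ s : ℝ, |s| ≤ 1 → ginv (g z₀ + s • A (0, vy)) = z₀ + s • (0, vy) := by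
    intro s hs
    have hlt : ‖s • vy‖ < η := by
      rw [norm_smul, Real.norm_eq_abs]
      calc |s| * ‖vy‖ ≤ 1 * ‖vy‖ := by gcongr
        _ < η := by linarith
    have h1 := haff (s • vy) hlt
    have h2 : ((0 : EuclideanSpace ℝ (Fin m₁)), s • vy) = s • (0, vy) := by simp
    rw [h2, map_smul, ← hAeq] at h1
    have h3 : z₀ + s • ((0 : EuclideanSpace ℝ (Fin m₁)), vy) ∈ U := by
      apply hηU
      rw [← h2]
      simpa [Prod.norm_def, hη] using hlt
    have h4 := hginv _ h3
    rw [h1] at h4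
    exact h4
  have hline := aux_line ginv (g z₀) (A (0, vy)) z₀ (0, vy) (hinvC.of_le (by norm_num)) (by
    filter_upwards [Metric.closedBall_mem_nhds (0 : ℝ) one_pos] with s hs
    exact hz0 s (by simpa using hs))
  have hone := hz0 1 (by simp)
  rw [one_smul, one_smul] at hone
  have hR' := hR (a * n) (A (0, vy)) v (lt_of_le_of_lt (by gcongr) hκρ)
    ((hAle _).trans (by
      gcongr
      simpa [Prod.norm_def] using hvy)) (by rw [← hAv]; exact hAle _)
  rw [hline.1, hline.2, hone, hginv z₀ hz₀] at hR'
  have hzero : z₀ + ((0 : EuclideanSpace ℝ (Fin m₁)), vy) - z₀ - (0, vy)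
      - (1 / 2 : ℝ) • (0 : EuclideanSpace ℝ (Fin m₁) × EuclideanSpace ℝ (Fin m₂)) = 0 := by
    rw [smul_zero]; abel
  rw [hzero, sub_zero] at hR'
  rw [iteratedFDeriv_two_apply, hginv z₀ hz₀]
  have hdiff : ‖v - A (0, vy)‖ ≤ a * ‖vx‖ := by
    rw [← hAv, ← map_sub]
    refine (hAle _).trans ?_
    gcongr
    simp [Prod.norm_def]
  have hnle : n ≤ ‖vx‖ + ‖vy‖ := by
    rw [hn, Prod.norm_def]
    exact max_le_add_of_nonneg (norm_nonneg _) (norm_nonneg _)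
  have hn0 : 0 ≤ n := norm_nonneg _
  refine le_trans hR' ?_
  have hx := norm_nonneg vx
  have hy := norm_nonneg vy
  generalize ‖vx‖ = X at *
  generalize ‖vy‖ = Y at *
  calc K * (a * n) * (a * n) * ‖v - A (0, vy)‖
      ≤ K * (a * (X + Y)) * (a * (X + Y)) * (a * X) := by gcongr
    _ = K * a ^ 3 * (X ^ 3 + 2 * (X ^ 2 * Y) + X * Y ^ 2) := by ring
    _ ≤ K * a ^ 3 * (2 * (X ^ 3 + X ^ 2 * Y + X * Y ^ 2)) := by
        gcongr
        have : 0 ≤ X ^ 3 := by positivity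
        have : 0 ≤ X * Y ^ 2 := by positivity
        linarith
    _ ≤ (2 * K * a ^ 3 + 1) * (X ^ 3 + X ^ 2 * Y + X * Y ^ 2) := by
        have : 0 ≤ X ^ 3 + X ^ 2 * Y + X * Y ^ 2 := by positivity
        linarith
end
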